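/- arXiv:2106.03227 — 5 statements merged into one kernel-verified Lean document; each statement's English description precedes it below -/
import Mathlib

section
/- (Theorem 3.3, power part, full bootstrap.) Assume the alternative hypothesis p ≠ q with δ_K > 0. Let α_level ∈ (0,1), define λ₁ = √(8 log(4/α_level)) and the threshold t_thres = 4 λ₁ √(ν/(c_a n)). If for some λ₂ > 0, n > (1/c_a) · max{ max{λ₁, λ₂}²/(9 ν), (ν/δ_K²)·(4(λ₁ + λ₂))² }, then the probability (under the joint product law of the four samples) that T̂_a ≤ t_thres is at most 4 e^{−λ₂²/8}. -/
open MeasureTheory Real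
open scoped BigOperators ENNReal

/-- The asymmetric empirical MMD statistic `T̂_a` of kernel `K`, computed between the
training sample `dtr = (X₍₁₎, Y₍₁₎)` and the test sample `dte = (X₍₂₎, Y₍₂₎)`. -/
noncomputable def asymMMD {𝒳 : Type*} (K : 𝒳 → 𝒳 → ℝ) (n1X n1Y n2X n2Y : ℕ)
    (dtr : (Fin n1X → 𝒳) × (Fin n1Y → 𝒳))
    (dte : (Fin n2X → 𝒳) × (Fin n2Y → 𝒳)) : ℝ :=
  (1/((n2X:ℝ)*(n1X:ℝ))) * ∑ i, ∑ j, K (dte.1 i) (dtr.1 j)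
  - (1/((n2X:ℝ)*(n1Y:ℝ))) * ∑ i, ∑ j, K (dte.1 i) (dtr.2 j)
  - (1/((n2Y:ℝ)*(n1X:ℝ))) * ∑ i, ∑ j, K (dte.2 i) (dtr.1 j)
  + (1/((n2Y:ℝ)*(n1Y:ℝ))) * ∑ i, ∑ j, K (dte.2 i) (dtr.2 j)

/-- The squared population MMD `δ_K = ∬ K d(p−q)d(p−q)`, written out as
`∬K dp dp − 2∬K dp dq + ∬K dq dq`. -/
noncomputable def deltaK {𝒳 : Type*} [MeasurableSpace 𝒳] (K : 𝒳 → 𝒳 → ℝ)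
    (p q : Measure 𝒳) : ℝ :=
  (∫ x, ∫ y, K x y ∂p ∂p) - 2 * (∫ x, ∫ y, K x y ∂q ∂p) + (∫ x, ∫ y, K x y ∂q ∂q)

lemma aux_int_pi {A : Type*} [MeasurableSpace A] (μ : Measure A) [IsProbabilityMeasure μ]
    {a N : ℕ} (σ : Fin N → Fin a) (hσ : Function.Injective σ) (h : Fin N → A → ℝ)
    (hm : ∀ i, Measurable (h i)) :
    ∫ x, ∏ i, h i (x (σ i)) ∂(Measure.pi fun _ : Fin a => μ) = ∏ i, ∫ y, h i y ∂μ := by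
  have h1 : ProbabilityTheory.iIndepFun (fun (i : Fin a) (ω : Fin a → A) => ω i)
      (Measure.pi fun _ : Fin a => μ) :=
    ProbabilityTheory.iIndepFun_pi (μ := fun _ : Fin a => μ) (X := fun _ x => x)
      (fun i => aemeasurable_id)
  have h2 := (h1.precomp hσ).comp h hm
  have h3 := h2.integral_fun_prod_eq_prod_integral (fun i =>
    ((hm i).comp (measurable_pi_apply (σ i))).aestronglyMeasurable)
  simp only [Function.comp_def] at h3
  rw [h3]
  refine Finset.prod_congr rfl fun i _ => ?_
  have h4 := measurePreserving_eval (fun _ : Fin a => μ) (σ i)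
  rw [← integral_map (φ := fun ω : Fin a → A => ω (σ i)) h4.measurable.aemeasurable
    (hm i).aestronglyMeasurable]
  rw [h4.map_eq]

lemma aux_integrable {Ω : Type*} [MeasurableSpace Ω] (μ : Measure Ω) [IsFiniteMeasure μ]
    (f : Ω → ℝ) (hf : Measurable f) (C : ℝ) (hC : ∀ x, |f x| ≤ C) : Integrable f μ :=
  Integrable.of_bound hf.aestronglyMeasurable C (Filter.Eventually.of_forall hC)

lemma aux_int_prod {A B : Type*} [MeasurableSpace A] [MeasurableSpace B]
    (μ : Measure A) [IsProbabilityMeasure μ] (η : Measure B) [IsProbabilityMeasure η]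
    {a b N : ℕ} (σ : Fin N → Fin a) (hσ : Function.Injective σ)
    (τ : Fin N → Fin b) (hτ : Function.Injective τ) (h : A → B → ℝ)
    (hm : Measurable (Function.uncurry h)) (C : ℝ) (hC : ∀ x y, |h x y| ≤ C) :
    Integrable (fun ω : (Fin a → A) × (Fin b → B) => ∏ i, h (ω.1 (σ i)) (ω.2 (τ i)))
      ((Measure.pi fun _ : Fin a => μ).prod (Measure.pi fun _ : Fin b => η)) ∧
    ∫ ω, ∏ i, h (ω.1 (σ i)) (ω.2 (τ i))
      ∂((Measure.pi fun _ : Fin a => μ).prod (Measure.pi fun _ : Fin b => η))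
      = (∫ x, ∫ y, h x y ∂η ∂μ) ^ N := by
  have hint : Integrable (fun ω : (Fin a → A) × (Fin b → B) => ∏ i, h (ω.1 (σ i)) (ω.2 (τ i)))
      ((Measure.pi fun _ : Fin a => μ).prod (Measure.pi fun _ : Fin b => η)) := by
    apply aux_integrable _ _ _ (C ^ N)
    · intro ω
      rw [Finset.abs_prod]
      calc _ ≤ ∏ _i : Fin N, C := Finset.prod_le_prod (fun _ _ => abs_nonneg _) (fun _ _ => hC _ _)
        _ = _ := by simp
    · refine Finset.measurable_prod _ fun i _ => ?_
      have : Measurable fun ω : (Fin a → A) × (Fin b → B) => (ω.1 (σ i), ω.2 (τ i)) := by fun_prop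
      exact hm.comp this
  refine ⟨hint, ?_⟩
  rw [integral_prod _ hint]
  have h1 : ∀ x : Fin a → A, ∫ y, ∏ i, h (x (σ i)) (y (τ i)) ∂(Measure.pi fun _ : Fin b => η)
      = ∏ i, ∫ y, h (x (σ i)) y ∂η := fun x =>
    aux_int_pi η τ hτ (fun i => h (x (σ i))) (fun i => hm.comp (measurable_const.prodMk measurable_id))
  simp only [h1]
  have h2 : Measurable fun x => ∫ y, h x y ∂η :=
    (hm.stronglyMeasurable.integral_prod_right (ν := η)).measurable
  rw [aux_int_pi μ σ hσ (fun _ x => ∫ y, h x y ∂η) (fun _ => h2)]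
  simp

lemma aux_avg {a b N : ℕ} [NeZero a] [NeZero b] (g : Fin a → Fin b → ℝ) :
    ∑ kl : Fin a × Fin b, ∑ i : Fin N,
      g (Fin.ofNat a i + kl.1) (Fin.ofNat b i + kl.2) = N * ∑ i, ∑ j, g i j := by
  rw [Finset.sum_comm]
  have : ∀ i : Fin N, ∑ kl : Fin a × Fin b, g (Fin.ofNat a i + kl.1) (Fin.ofNat b i + kl.2)
      = ∑ i, ∑ j, g i j := by
    intro i
    rw [Fintype.sum_prod_type]
    rw [← Equiv.sum_comp (Equiv.addLeft (Fin.ofNat a i)) (fun i => ∑ j, g i j)]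
    refine Finset.sum_congr rfl fun k _ => ?_
    rw [← Equiv.sum_comp (Equiv.addLeft (Fin.ofNat b i)) (fun j => g _ j)]
    rfl
  rw [Finset.sum_congr rfl fun i _ => this i, Finset.sum_const, Finset.card_univ,
    Fintype.card_fin, nsmul_eq_mul]

lemma aux_inj {a N : ℕ} [NeZero a] (h : N ≤ a) (k : Fin a) :
    Function.Injective fun i : Fin N => Fin.ofNat a i + k := by
  intro i j hij
  have h1 := add_right_cancel hij
  have h2 := congrArg Fin.val h1
  simp only [Fin.val_ofNat] at h2
  rw [Nat.mod_eq_of_lt (by omega), Nat.mod_eq_of_lt (by omega)] at h2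
  exact Fin.ext h2

lemma aux_core {A B : Type*} [MeasurableSpace A] [MeasurableSpace B]
    (μ : Measure A) [IsProbabilityMeasure μ] (η : Measure B) [IsProbabilityMeasure η]
    (g : A → B → ℝ) (hm : Measurable (Function.uncurry g)) (hC : ∀ x y, |g x y| ≤ 2)
    (ν : ℝ) (hν : 0 < ν) (h0 : ∫ z, g z.1 z.2 ∂(μ.prod η) = 0)
    (h2 : ∫ z, (g z.1 z.2) ^ 2 ∂(μ.prod η) ≤ ν)
    (a b : ℕ) (m : ℝ) (hm0 : 0 < m) (hma : m ≤ a) (hmb : m ≤ b) (l : ℝ) (hl : 0 < l)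
    (hlm : l ^ 2 ≤ 9 * ν * m) :
    ((Measure.pi fun _ : Fin a => μ).prod (Measure.pi fun _ : Fin b => η))
      {ω | l * √(ν / m) ≤ (1 / ((a : ℝ) * b)) * ∑ i, ∑ j, g (ω.1 i) (ω.2 j)}
      ≤ ENNReal.ofReal (Real.exp (-l ^ 2 / 8)) := by
  have ha : 0 < (a : ℝ) := hm0.trans_le hma
  have hb : 0 < (b : ℝ) := hm0.trans_le hmb
  haveI : NeZero a := ⟨by rintro rfl; simp at ha⟩
  haveI : NeZero b := ⟨by rintro rfl; simp at hb⟩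
  set P := (Measure.pi fun _ : Fin a => μ).prod (Measure.pi fun _ : Fin b => η) with hP
  set t := l * √(ν / m) with ht
  have ht0 : 0 < t := by positivity
  have ht2 : t ^ 2 = l ^ 2 * ν / m := by
    rw [ht, mul_pow, Real.sq_sqrt (by positivity)]; ring
  have ht3 : t ≤ 3 * ν := by
    apply le_of_sq_le_sq _ (by positivity)
    rw [ht2, div_le_iff₀ hm0]; nlinarith
  set s := t / (6 * ν) with hs
  have hs0 : 0 < s := by positivity
  have hs1 : s ≤ 1 / 2 := by rw [hs, div_le_iff₀ (by positivity)]; linarith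
  set N := min a b with hN
  have hNm : m ≤ (N : ℝ) := by rw [hN, Nat.cast_min]; exact le_min hma hmb
  have hsg : ∀ x y, |s * g x y| ≤ 1 := fun x y => by
    rw [abs_mul, abs_of_pos hs0]; nlinarith [hC x y, abs_nonneg (g x y)]
  set h : A → B → ℝ := fun x y => Real.exp (s * g x y) with hh
  have hhm : Measurable (Function.uncurry h) := (hm.const_mul s).exp
  have hhC : ∀ x y, |h x y| ≤ Real.exp 1 := fun x y => by
    rw [hh, abs_of_pos (Real.exp_pos _)]
    exact Real.exp_le_exp.2 (le_of_abs_le (hsg x y))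
  have ig : Integrable (fun z : A × B => g z.1 z.2) (μ.prod η) :=
    aux_integrable _ _ hm 2 fun z => hC _ _
  have ig2 : Integrable (fun z : A × B => (g z.1 z.2) ^ 2) (μ.prod η) :=
    aux_integrable _ _ (hm.pow_const 2) 4 fun z => by
      rw [abs_pow]; nlinarith [hC z.1 z.2, abs_nonneg (g z.1 z.2)]
  have ih : Integrable (fun z : A × B => h z.1 z.2) (μ.prod η) :=
    aux_integrable _ _ hhm _ fun z => hhC _ _
  have hmgf : ∫ x, ∫ y, h x y ∂η ∂μ ≤ Real.exp (s ^ 2 * ν) := by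
    rw [← integral_prod (fun z : A × B => h z.1 z.2) ih]
    calc _ ≤ ∫ z : A × B, (1 + s * g z.1 z.2 + s ^ 2 * (g z.1 z.2) ^ 2) ∂(μ.prod η) := by
          refine integral_mono ih
            (((integrable_const 1).add (ig.const_mul s)).add (ig2.const_mul _)) fun z => ?_
          have := le_of_abs_le (Real.abs_exp_sub_one_sub_id_le (hsg z.1 z.2))
          simp only [hh]; nlinarith
      _ = 1 + s ^ 2 * ∫ z, (g z.1 z.2) ^ 2 ∂(μ.prod η) := by
          have ia : Integrable (fun z : A × B => 1 + s * g z.1 z.2) (μ.prod η) :=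
            (integrable_const 1).add (ig.const_mul s)
          rw [integral_add ia (ig2.const_mul _),
            integral_add (integrable_const 1) (ig.const_mul s), integral_const_mul,
            integral_const_mul, h0]
          simp
      _ ≤ 1 + s ^ 2 * ν := by gcongr
      _ ≤ _ := by linarith [Real.add_one_le_exp (s ^ 2 * ν)]
  have hmgf0 : 0 ≤ ∫ x, ∫ y, h x y ∂η ∂μ :=
    integral_nonneg fun x => integral_nonneg fun y => (Real.exp_pos _).le
  -- statistic
  set Y : (Fin a → A) × (Fin b → B) → ℝ :=
    fun ω => (1 / ((a : ℝ) * b)) * ∑ i, ∑ j, g (ω.1 i) (ω.2 j) with hY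
  have hYm : Measurable Y := by
    refine Measurable.const_mul ?_ _
    refine Finset.measurable_sum _ fun i _ => Finset.measurable_sum _ fun j _ => ?_
    have : Measurable fun ω : (Fin a → A) × (Fin b → B) => (ω.1 i, ω.2 j) := by fun_prop
    exact hm.comp this
  have hYb : ∀ ω, Real.exp (N * s * Y ω) ≤ ∑ kl : Fin a × Fin b, (1 / ((a : ℝ) * b)) *
      ∏ i : Fin N, h (ω.1 (Fin.ofNat a i + kl.1)) (ω.2 (Fin.ofNat b i + kl.2)) := by
    intro ω
    have e1 : N * s * Y ω = ∑ kl : Fin a × Fin b, (1 / ((a : ℝ) * b)) •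
        ∑ i : Fin N, s * g (ω.1 (Fin.ofNat a i + kl.1)) (ω.2 (Fin.ofNat b i + kl.2)) := by
      rw [← Finset.smul_sum]
      have := aux_avg (N := N) (fun i j => g (ω.1 i) (ω.2 j))
      simp only [← Finset.mul_sum, smul_eq_mul]
      rw [this, hY]; ring
    rw [e1]
    have := convexOn_exp.map_sum_le (t := (Finset.univ : Finset (Fin a × Fin b)))
      (w := fun _ => (1 / ((a : ℝ) * b))) (p := fun kl => ∑ i : Fin N,
        s * g (ω.1 (Fin.ofNat a i + kl.1)) (ω.2 (Fin.ofNat b i + kl.2)))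
      (fun _ _ => by positivity) (by simp; field_simp) (fun _ _ => Set.mem_univ _)
    refine this.trans_eq ?_
    refine Finset.sum_congr rfl fun kl _ => ?_
    rw [Real.exp_sum, smul_eq_mul]
  have key := fun kl : Fin a × Fin b => aux_int_prod μ η
    (fun i : Fin N => Fin.ofNat a i + kl.1) (aux_inj (min_le_left a b) kl.1)
    (fun i : Fin N => Fin.ofNat b i + kl.2) (aux_inj (min_le_right a b) kl.2) h hhm _ hhC
  have iR : Integrable (fun ω : (Fin a → A) × (Fin b → B) =>
      ∑ kl : Fin a × Fin b, (1 / ((a : ℝ) * b)) *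
      ∏ i : Fin N, h (ω.1 (Fin.ofNat a i + kl.1)) (ω.2 (Fin.ofNat b i + kl.2))) P :=
    integrable_finsetSum _ fun kl _ => (key kl).1.const_mul _
  have iL : Integrable (fun ω => Real.exp (N * s * Y ω)) P := by
    refine iR.mono' (hYm.const_mul _).exp.aestronglyMeasurable
      (Filter.Eventually.of_forall fun ω => ?_)
    rw [Real.norm_eq_abs, abs_of_pos (Real.exp_pos _)]
    exact hYb ω
  have hmg : ProbabilityTheory.mgf Y P (N * s) ≤ Real.exp (s ^ 2 * ν) ^ N := by
    unfold ProbabilityTheory.mgf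
    refine (integral_mono iL iR hYb).trans ?_
    rw [integral_finsetSum _ fun kl _ => (key kl).1.const_mul _]
    simp only [integral_const_mul, fun kl => (key kl).2]
    simp only [Finset.sum_const, Finset.card_univ, Fintype.card_prod, Fintype.card_fin, nsmul_eq_mul]
    push_cast
    rw [← mul_assoc, mul_one_div_cancel (by positivity), one_mul]
    exact pow_le_pow_left₀ hmgf0 hmgf N
  have hch := ProbabilityTheory.measure_ge_le_exp_mul_mgf (μ := P) (X := Y) t
    (t := N * s) (by positivity) iL
  have hfin : P.real {ω | t ≤ Y ω} ≤ Real.exp (-l ^ 2 / 8) := by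
    refine hch.trans ?_
    calc _ ≤ Real.exp (-(N * s) * t) * Real.exp (s ^ 2 * ν) ^ N := by gcongr
      _ = Real.exp (-(N * (5 / 36 * (t ^ 2 / ν)))) := by
        rw [← Real.exp_nat_mul, ← Real.exp_add]
        congr 1
        rw [hs]; field_simp; ring
      _ ≤ _ := by
        apply Real.exp_le_exp.2
        have e : t ^ 2 / ν = l ^ 2 / m := by rw [ht2]; field_simp
        rw [e]
        have : l ^ 2 ≤ N * (l ^ 2 / m) := by
          rw [← mul_div_assoc, le_div_iff₀ hm0, mul_comm]
          gcongr
        have : 0 < l ^ 2 := by positivity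
        linarith
  rw [← ENNReal.ofReal_toReal (measure_ne_top P _)]
  exact ENNReal.ofReal_le_ofReal hfin

lemma aux_dev {A B : Type*} [MeasurableSpace A] [MeasurableSpace B]
    (μ : Measure A) [IsProbabilityMeasure μ] (η : Measure B) [IsProbabilityMeasure η]
    (f : A → B → ℝ) (hm : Measurable (Function.uncurry f)) (hC : ∀ x y, |f x y| ≤ 1)
    (ν : ℝ) (hν : 0 < ν) (h2 : ∫ x, ∫ y, (f x y) ^ 2 ∂η ∂μ ≤ ν)
    (a b : ℕ) (m : ℝ) (hm0 : 0 < m) (hma : m ≤ a) (hmb : m ≤ b) (l : ℝ) (hl : 0 < l)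
    (hlm : l ^ 2 ≤ 9 * ν * m) :
    ((Measure.pi fun _ : Fin a => μ).prod (Measure.pi fun _ : Fin b => η))
      {ω | (1 / ((a : ℝ) * b)) * ∑ i, ∑ j, f (ω.1 i) (ω.2 j)
          ≤ (∫ x, ∫ y, f x y ∂η ∂μ) - l * √(ν / m)}
      ≤ ENNReal.ofReal (Real.exp (-l ^ 2 / 8)) := by
  have ha : 0 < (a : ℝ) := hm0.trans_le hma
  have hb : 0 < (b : ℝ) := hm0.trans_le hmb
  have i1 : Integrable (fun z : A × B => f z.1 z.2) (μ.prod η) :=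
    aux_integrable _ _ hm 1 fun z => hC _ _
  have i2 : Integrable (fun z : A × B => (f z.1 z.2) ^ 2) (μ.prod η) :=
    aux_integrable _ _ (hm.pow_const 2) 1 fun z => by
      rw [abs_pow]; nlinarith [hC z.1 z.2, abs_nonneg (f z.1 z.2)]
  rw [← integral_prod (fun z : A × B => (f z.1 z.2) ^ 2) i2] at h2
  rw [← integral_prod (fun z : A × B => f z.1 z.2) i1]
  set M := ∫ z : A × B, f z.1 z.2 ∂(μ.prod η) with hM
  have hM1 : |M| ≤ 1 := by
    have := norm_integral_le_of_norm_le_const (μ := μ.prod η) (f := fun z : A × B => f z.1 z.2)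
      (C := 1) (Filter.Eventually.of_forall fun z => hC _ _)
    simpa using this
  have := aux_core μ η (fun x y => M - f x y) (measurable_const.sub hm)
    (fun x y => (abs_sub _ _).trans (by linarith [hC x y])) ν hν
    (by rw [integral_sub (integrable_const _) i1]; simp [hM])
    (by
      have e : ∀ z : A × B, (M - f z.1 z.2) ^ 2 = M ^ 2 - 2 * M * f z.1 z.2 + f z.1 z.2 ^ 2 :=
        fun z => by ring
      simp only [e]
      have ia : Integrable (fun z : A × B => M ^ 2 - 2 * M * f z.1 z.2) (μ.prod η) :=
        (integrable_const _).sub (i1.const_mul _)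
      rw [integral_add ia i2,
        integral_sub (integrable_const _) (i1.const_mul _), integral_const_mul, ← hM]
      simp
      nlinarith [sq_nonneg M])
    a b m hm0 hma hmb l hl hlm
  refine (measure_mono fun ω hω => ?_).trans this
  simp only [Set.mem_setOf_eq] at hω ⊢
  simp only [Finset.sum_sub_distrib, Finset.sum_const, Finset.card_univ, Fintype.card_fin,
    nsmul_eq_mul, mul_sub]
  have : 1 / ((a : ℝ) * b) * (a * (b * M)) = M := by field_simp
  rw [this]
  linarith

lemma aux_jensen {A B : Type*} [MeasurableSpace A] [MeasurableSpace B]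
    (μ : Measure A) [IsProbabilityMeasure μ] (η : Measure B) [IsProbabilityMeasure η]
    (f : A → B → ℝ) (hm : Measurable (Function.uncurry f)) (hC : ∀ x y, |f x y| ≤ 1)
    (h2 : ∫ x, ∫ y, (f x y) ^ 2 ∂η ∂μ ≤ 0) : ∫ x, ∫ y, f x y ∂η ∂μ = 0 := by
  have i1 : Integrable (fun z : A × B => f z.1 z.2) (μ.prod η) :=
    aux_integrable _ _ hm 1 fun z => hC _ _
  have i2 : Integrable (fun z : A × B => (f z.1 z.2) ^ 2) (μ.prod η) :=
    aux_integrable _ _ (hm.pow_const 2) 1 fun z => by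
      rw [abs_pow]; nlinarith [hC z.1 z.2, abs_nonneg (f z.1 z.2)]
  rw [← integral_prod (fun z : A × B => (f z.1 z.2) ^ 2) i2] at h2
  rw [← integral_prod (fun z : A × B => f z.1 z.2) i1]
  have h3 : ∫ z : A × B, (f z.1 z.2) ^ 2 ∂(μ.prod η) = 0 :=
    le_antisymm h2 (integral_nonneg fun z => sq_nonneg _)
  rw [integral_eq_zero_iff_of_nonneg (fun z => sq_nonneg _) i2] at h3
  apply integral_eq_zero_of_ae
  filter_upwards [h3] with z hz
  simpa using hz

/-- Theorem 3.3, power part (full bootstrap): under `H₁ : p ≠ q` with `δ_K > 0`, with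
`λ₁ = √(8 log(4/α))` and threshold `t_thres = 4λ₁√(ν/(c_a n))`, if for some `λ₂ > 0`,
`n > (1/c_a)·max{max{λ₁,λ₂}²/(9ν), (ν/δ_K²)(4(λ₁+λ₂))²}`, then
`Pr[T̂_a ≤ t_thres] ≤ 4 e^{−λ₂²/8}` under the joint product law of the four samples. -/
theorem asym_mmd_power_full_bootstrap
    {d : ℕ} (𝒳 : Set (EuclideanSpace ℝ (Fin d))) (h𝒳 : MeasurableSet 𝒳)
    (K : 𝒳 → 𝒳 → ℝ)
    (hKmeas : Measurable (Function.uncurry K))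
    (hKsym : ∀ x y, K x y = K y x)
    (hKpsd : ∀ (m : ℕ) (z : Fin m → 𝒳) (a : Fin m → ℝ),
      0 ≤ ∑ i, ∑ j, a i * a j * K (z i) (z j))
    (hKbdd : ∀ x y, |K x y| ≤ 1)
    (p q : Measure 𝒳) [IsProbabilityMeasure p] [IsProbabilityMeasure q]
    (ν : ℝ) (hν1 : ν ≤ 1)
    (hνpp : ∫ x, ∫ y, (K x y)^2 ∂p ∂p ≤ ν)
    (hνpq : ∫ x, ∫ y, (K x y)^2 ∂q ∂p ≤ ν)
    (hνqq : ∫ x, ∫ y, (K x y)^2 ∂q ∂q ≤ ν)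
    (n1X n1Y n2X n2Y : ℕ) (ca : ℝ) (hca : 0 < ca) (hca1 : ca < 1)
    (hbal1 : ca * ((n1X + n1Y + n2X + n2Y : ℕ) : ℝ) ≤ (n1X : ℝ))
    (hbal2 : ca * ((n1X + n1Y + n2X + n2Y : ℕ) : ℝ) ≤ (n1Y : ℝ))
    (hbal3 : ca * ((n1X + n1Y + n2X + n2Y : ℕ) : ℝ) ≤ (n2X : ℝ))
    (hbal4 : ca * ((n1X + n1Y + n2X + n2Y : ℕ) : ℝ) ≤ (n2Y : ℝ))
    (hH1 : p ≠ q) (hδ : 0 < deltaK K p q)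
    (α : ℝ) (hα : 0 < α) (hα1 : α < 1)
    (lam₂ : ℝ) (hlam₂ : 0 < lam₂)
    (hn : ((n1X + n1Y + n2X + n2Y : ℕ) : ℝ) > (1/ca) * max
      ((max (Real.sqrt (8 * Real.log (4/α))) lam₂)^2 / (9 * ν))
      ((ν / (deltaK K p q)^2)
        * (4 * (Real.sqrt (8 * Real.log (4/α)) + lam₂))^2)) :
    (((Measure.pi fun _ : Fin n1X => p).prod (Measure.pi fun _ : Fin n1Y => q)).prod
      ((Measure.pi fun _ : Fin n2X => p).prod (Measure.pi fun _ : Fin n2Y => q)))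
      {ω : ((Fin n1X → 𝒳) × (Fin n1Y → 𝒳)) × ((Fin n2X → 𝒳) × (Fin n2Y → 𝒳)) |
        asymMMD K n1X n1Y n2X n2Y ω.1 ω.2 ≤
          4 * Real.sqrt (8 * Real.log (4/α))
            * Real.sqrt (ν/(ca * ((n1X + n1Y + n2X + n2Y : ℕ) : ℝ)))}
      ≤ ENNReal.ofReal (4 * Real.exp (-lam₂^2 / 8)) := by
  set n : ℝ := ((n1X + n1Y + n2X + n2Y : ℕ) : ℝ) with hndef
  set l₁ := Real.sqrt (8 * Real.log (4/α)) with hl₁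
  have hl₁0 : 0 ≤ l₁ := Real.sqrt_nonneg _
  have hν : 0 < ν := by
    by_contra hcon
    push Not at hcon
    unfold deltaK at hδ
    rw [aux_jensen p p K hKmeas hKbdd (hνpp.trans hcon),
      aux_jensen p q K hKmeas hKbdd (hνpq.trans hcon),
      aux_jensen q q K hKmeas hKbdd (hνqq.trans hcon)] at hδ
    norm_num at hδ
  set D := deltaK K p q with hD
  have hn' : max ((max l₁ lam₂)^2 / (9 * ν)) ((ν / D^2) * (4 * (l₁ + lam₂))^2) < ca * n := by
    have := mul_lt_mul_of_pos_left hn hca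
    rwa [← mul_assoc, mul_one_div_cancel hca.ne', one_mul] at this
  set m := ca * n with hm
  have hA := (le_max_left _ _).trans_lt hn'
  have hB := (le_max_right _ _).trans_lt hn'
  have hm0 : 0 < m := lt_of_le_of_lt (by positivity) hA
  have hlm : lam₂ ^ 2 ≤ 9 * ν * m := by
    rw [div_lt_iff₀ (by positivity)] at hA
    have : lam₂ ^ 2 ≤ (max l₁ lam₂) ^ 2 := pow_le_pow_left₀ hlam₂.le (le_max_right _ _) 2
    linarith
  set u := √(ν / m) with hu
  have hDu : 4 * (l₁ + lam₂) * u < D := by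
    apply lt_of_pow_lt_pow_left₀ 2 hδ.le
    rw [mul_pow, hu, Real.sq_sqrt (by positivity)]
    rw [div_mul_eq_mul_div, div_lt_iff₀ (by positivity)] at hB
    rw [← mul_div_assoc, div_lt_iff₀ hm0]
    linarith
  have hKneg : Measurable (Function.uncurry fun x y => -K x y) := hKmeas.neg
  have b1 := aux_dev p p K hKmeas hKbdd ν hν hνpp n1X n2X m hm0 hbal1 hbal3 lam₂ hlam₂ hlm
  have b4 := aux_dev q q K hKmeas hKbdd ν hν hνqq n1Y n2Y m hm0 hbal2 hbal4 lam₂ hlam₂ hlm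
  have b2 := aux_dev p q (fun x y => -K x y) hKneg (by simpa using hKbdd) ν hν (by simpa using hνpq)
    n2X n1Y m hm0 hbal3 hbal2 lam₂ hlam₂ hlm
  have b3 := aux_dev p q (fun x y => -K x y) hKneg (by simpa using hKbdd) ν hν (by simpa using hνpq)
    n1X n2Y m hm0 hbal1 hbal4 lam₂ hlam₂ hlm
  simp only [integral_neg, Finset.sum_neg_distrib] at b2 b3
  set PX1 := Measure.pi fun _ : Fin n1X => p
  set PY1 := Measure.pi fun _ : Fin n1Y => q
  set PX2 := Measure.pi fun _ : Fin n2X => p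
  set PY2 := Measure.pi fun _ : Fin n2Y => q
  have m1 : MeasurePreserving (Prod.map Prod.fst Prod.fst)
      ((PX1.prod PY1).prod (PX2.prod PY2)) (PX1.prod PX2) :=
    measurePreserving_fst.prod measurePreserving_fst
  have m2 : MeasurePreserving (Prod.swap ∘ Prod.map Prod.snd Prod.fst)
      ((PX1.prod PY1).prod (PX2.prod PY2)) (PX2.prod PY1) :=
    Measure.measurePreserving_swap.comp (measurePreserving_snd.prod measurePreserving_fst)
  have m3 : MeasurePreserving (Prod.map Prod.fst Prod.snd)
      ((PX1.prod PY1).prod (PX2.prod PY2)) (PX1.prod PY2) :=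
    measurePreserving_fst.prod measurePreserving_snd
  have m4 : MeasurePreserving (Prod.map Prod.snd Prod.snd)
      ((PX1.prod PY1).prod (PX2.prod PY2)) (PY1.prod PY2) :=
    measurePreserving_snd.prod measurePreserving_snd
  have c1 := (m1.measure_preimage_le _).trans b1
  have c2 := (m2.measure_preimage_le _).trans b2
  have c3 := (m3.measure_preimage_le _).trans b3
  have c4 := (m4.measure_preimage_le _).trans b4
  have hsum : ENNReal.ofReal (4 * Real.exp (-lam₂^2 / 8)) =
      ENNReal.ofReal (Real.exp (-lam₂^2 / 8)) + ENNReal.ofReal (Real.exp (-lam₂^2 / 8))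
      + ENNReal.ofReal (Real.exp (-lam₂^2 / 8)) + ENNReal.ofReal (Real.exp (-lam₂^2 / 8)) := by
    have := (Real.exp_pos (-lam₂^2 / 8)).le
    rw [← ENNReal.ofReal_add this this, ← ENNReal.ofReal_add (by linarith) this,
      ← ENNReal.ofReal_add (by linarith) this]
    congr 1; ring
  rw [hsum]
  refine le_trans (measure_mono ?_) ((measure_union_le _ _).trans (add_le_add
    ((measure_union_le _ _).trans (add_le_add ((measure_union_le _ _).trans
      (add_le_add c1 c2)) c3)) c4))
  rintro ⟨⟨x1, y1⟩, ⟨x2, y2⟩⟩ hω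
  by_contra hcon
  simp only [Set.mem_union, Set.mem_preimage, Set.mem_setOf_eq, Prod.map, Function.comp,
    Prod.swap, not_or, not_le] at hcon
  obtain ⟨⟨⟨d1, d2⟩, d3⟩, d4⟩ := hcon
  simp only [Set.mem_setOf_eq, asymMMD] at hω
  have s1 : ∑ i, ∑ j, K (x2 i) (x1 j) = ∑ i, ∑ j, K (x1 i) (x2 j) := by
    rw [Finset.sum_comm]
    exact Finset.sum_congr rfl fun i _ => Finset.sum_congr rfl fun j _ => hKsym _ _
  have s3 : ∑ i, ∑ j, K (y2 i) (x1 j) = ∑ i, ∑ j, K (x1 i) (y2 j) := by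
    rw [Finset.sum_comm]
    exact Finset.sum_congr rfl fun i _ => Finset.sum_congr rfl fun j _ => hKsym _ _
  have s4 : ∑ i, ∑ j, K (y2 i) (y1 j) = ∑ i, ∑ j, K (y1 i) (y2 j) := by
    rw [Finset.sum_comm]
    exact Finset.sum_congr rfl fun i _ => Finset.sum_congr rfl fun j _ => hKsym _ _
  rw [s1, s3, s4, mul_comm (n2X : ℝ) n1X, mul_comm (n2Y : ℝ) n1X, mul_comm (n2Y : ℝ) n1Y] at hω
  have hD' : D = (∫ x, ∫ y, K x y ∂p ∂p) - 2 * (∫ x, ∫ y, K x y ∂q ∂p)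
    + (∫ x, ∫ y, K x y ∂q ∂q) := rfl
  linarith
end

section
/- (Proposition B.1, part 1: concentration of T̂ under H0.) Assume p = q. Then for any 0 < λ < 3 √(c ν n), with probability at least 1 − 3 e^{−λ²/8} under the product law p^{⊗n_X} ⊗ q^{⊗n_Y}, T̂ ≤ 4/(c n) + 4 λ √(ν/(c n)). -/
open MeasureTheory Real
open scoped BigOperators ENNReal

/-- The biased empirical squared MMD statistic `T̂` of kernel `K` on samples
`ω = (X, Y)` with `n_X` and `n_Y` points. -/
noncomputable def mmdStat {𝒳 : Type*} (K : 𝒳 → 𝒳 → ℝ) (nX nY : ℕ)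
    (ω : (Fin nX → 𝒳) × (Fin nY → 𝒳)) : ℝ :=
  (1/(nX:ℝ)^2) * ∑ i, ∑ j, K (ω.1 i) (ω.1 j)
  + (1/(nY:ℝ)^2) * ∑ i, ∑ j, K (ω.2 i) (ω.2 j)
  - (2/((nX:ℝ)*(nY:ℝ))) * ∑ i, ∑ j, K (ω.1 i) (ω.2 j)

lemma exp_quad {u : ℝ} (hu : |u| ≤ 3/2) : Real.exp u ≤ 1 + u + u^2 := by
  rcases le_total 0 u with h | h
  · rw [abs_of_nonneg h] at hu
    obtain ⟨w, rfl⟩ : ∃ w, u = w + w := ⟨u/2, by ring⟩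
    have hw0 : 0 ≤ w := by linarith
    have hw1 : w ≤ 3/4 := by linarith
    have h1 := Real.exp_bound' hw0 (by linarith) (n := 3) (by norm_num)
    simp [Finset.sum_range_succ, Nat.factorial] at h1
    have h2 : Real.exp w ≤ 1 + w + w^2/2 + 2/9 * w^3 := by linarith
    rw [Real.exp_add]
    have h3 : Real.exp w * Real.exp w ≤ (1 + w + w^2/2 + 2/9 * w^3) * (1 + w + w^2/2 + 2/9 * w^3) := by
      have := (Real.exp_pos w).le
      gcongr
    refine h3.trans ?_
    have h4 : 13/9 * w + 25/36 * w^2 + 2/9 * w^3 + 4/81 * w^4 ≤ 2 := by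
      have a2 : w^2 ≤ (3/4)^2 := by gcongr
      have a3 : w^3 ≤ (3/4)^3 := by gcongr
      have a4 : w^4 ≤ (3/4)^4 := by gcongr
      linarith
    nlinarith [mul_le_mul_of_nonneg_left h4 (sq_nonneg w)]
  · obtain ⟨v, rfl⟩ : ∃ v, u = -v := ⟨-u, by ring⟩
    have hv : 0 ≤ v := by linarith
    have h1 := Real.quadratic_le_exp_of_nonneg hv
    rw [Real.exp_neg, inv_le_iff_one_le_mul₀ (Real.exp_pos v)]
    have h2 : 0 ≤ 1 + -v + (-v)^2 := by nlinarith [sq_nonneg (v - 1/2)]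
    nlinarith [mul_le_mul_of_nonneg_left h1 h2, pow_nonneg hv 2, pow_nonneg hv 3, pow_nonneg hv 4]

open ProbabilityTheory

lemma mgf_K {𝒳 : Type*} [MeasurableSpace 𝒳] (p : Measure 𝒳) [IsProbabilityMeasure p]
    (K : 𝒳 → 𝒳 → ℝ) (hKmeas : Measurable (Function.uncurry K)) (hKbdd : ∀ x y, |K x y| ≤ 1)
    (ν : ℝ) (hν : ∫ x, ∫ y, (K x y)^2 ∂p ∂p ≤ ν) (s : ℝ) (hs0 : 0 ≤ s) (hs : s ≤ 3/2) :
    mgf (Function.uncurry K) (p.prod p) s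
      ≤ Real.exp (s * (∫ x, ∫ y, K x y ∂p ∂p) + s^2 * ν) := by
  have hK1 : Integrable (Function.uncurry K) (p.prod p) :=
    Integrable.of_bound hKmeas.aestronglyMeasurable 1 (ae_of_all _ fun z => hKbdd z.1 z.2)
  have hK2 : Integrable (fun z => (Function.uncurry K z)^2) (p.prod p) :=
    Integrable.of_bound (hKmeas.pow_const 2).aestronglyMeasurable 1 (ae_of_all _ fun z => by
      have := hKbdd z.1 z.2
      rw [norm_pow]
      exact pow_le_one₀ (norm_nonneg _) this)
  have e1 : ∫ x, ∫ y, K x y ∂p ∂p = ∫ z, Function.uncurry K z ∂(p.prod p) :=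
    (integral_prod _ hK1).symm
  have e2 : ∫ x, ∫ y, (K x y)^2 ∂p ∂p = ∫ z, (Function.uncurry K z)^2 ∂(p.prod p) :=
    (integral_prod _ hK2).symm
  rw [e2] at hν
  rw [e1]
  have hpt : ∀ z, Real.exp (s * Function.uncurry K z) ≤
      1 + s * Function.uncurry K z + s^2 * (Function.uncurry K z)^2 := fun z => by
    have := hKbdd z.1 z.2
    have h := exp_quad (u := s * Function.uncurry K z) (by
      rw [abs_mul, abs_of_nonneg hs0]
      calc s * |Function.uncurry K z| ≤ s * 1 := by gcongr; exact this
        _ ≤ 3/2 := by linarith)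
    rw [mul_pow] at h
    exact h
  have hi : Integrable (fun z => 1 + s * Function.uncurry K z + s^2 * (Function.uncurry K z)^2)
      (p.prod p) := ((integrable_const 1).add (hK1.const_mul s)).add (hK2.const_mul _)
  calc mgf (Function.uncurry K) (p.prod p) s
      ≤ ∫ z, (1 + s * Function.uncurry K z + s^2 * (Function.uncurry K z)^2) ∂(p.prod p) := by
        apply integral_mono_of_nonneg (ae_of_all _ fun z => (Real.exp_pos _).le) hi
          (ae_of_all _ hpt)
    _ = 1 + s * ∫ z, Function.uncurry K z ∂(p.prod p)
          + s^2 * ∫ z, (Function.uncurry K z)^2 ∂(p.prod p) := by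
        have ha : Integrable (fun z => 1 + s * Function.uncurry K z) (p.prod p) :=
          (integrable_const 1).add (hK1.const_mul s)
        rw [integral_add ha (hK2.const_mul _),
          integral_add (integrable_const 1) (hK1.const_mul s), integral_const_mul,
          integral_const_mul]
        simp
    _ ≤ s * ∫ z, Function.uncurry K z ∂(p.prod p) + s^2 * ν + 1 := by
        have := mul_le_mul_of_nonneg_left hν (sq_nonneg s)
        linarith
    _ ≤ _ := Real.add_one_le_exp _

lemma meas_K2 {𝒳 Ω : Type*} [MeasurableSpace 𝒳] [MeasurableSpace Ω]
    {K : 𝒳 → 𝒳 → ℝ} (hKmeas : Measurable (Function.uncurry K)) {f g : Ω → 𝒳}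
    (hf : Measurable f) (hg : Measurable g) : Measurable (fun ω => K (f ω) (g ω)) :=
  hKmeas.comp (hf.prodMk hg)

lemma mgf_pairs {𝒳 ι : Type*} [MeasurableSpace 𝒳] [Fintype ι] (p : Measure 𝒳)
    [IsProbabilityMeasure p]
    (K : 𝒳 → 𝒳 → ℝ) (hKmeas : Measurable (Function.uncurry K))
    (m : ℕ) (e : Fin m ⊕ Fin m → ι) (he : Function.Injective e) (t : ℝ) (s : Finset (Fin m)) :
    mgf (fun ω : ι → 𝒳 => ∑ k ∈ s, K (ω (e (Sum.inl k))) (ω (e (Sum.inr k))))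
      (Measure.pi fun _ => p) t = (mgf (Function.uncurry K) (p.prod p) t) ^ s.card := by
  classical
  have h0 : iIndepFun (fun (i : ι) (ω : ι → 𝒳) => ω i) (Measure.pi fun _ => p) :=
    iIndepFun_pi (X := fun _ x => x) (fun _ => aemeasurable_id)
  have h1 : iIndepFun (fun (j : Fin m ⊕ Fin m) (ω : ι → 𝒳) => ω (e j)) (Measure.pi fun _ => p) :=
    h0.precomp he
  have hm1 : ∀ j, Measurable (fun ω : ι → 𝒳 => ω (e j)) := fun j => measurable_pi_apply _
  have hKm : ∀ k, Measurable (fun ω : ι → 𝒳 => K (ω (e (Sum.inl k))) (ω (e (Sum.inr k)))) :=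
    fun k => hKmeas.comp ((hm1 _).prodMk (hm1 _))
  induction s using Finset.induction_on with
  | empty => simp [mgf]
  | insert k s hk ih =>
    have hsing : mgf (fun ω : ι → 𝒳 => K (ω (e (Sum.inl k))) (ω (e (Sum.inr k))))
        (Measure.pi fun _ => p) t = mgf (Function.uncurry K) (p.prod p) t := by
      have hi : IndepFun (fun ω : ι → 𝒳 => ω (e (Sum.inl k))) (fun ω : ι → 𝒳 => ω (e (Sum.inr k)))
          (Measure.pi fun _ => p) := h1.indepFun (by simp)
      have hmap := (indepFun_iff_map_prod_eq_prod_map_map (hm1 _).aemeasurable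
        (hm1 _).aemeasurable).1 hi
      have hev : ∀ j, (Measure.pi fun _ : ι => p).map (fun ω : ι → 𝒳 => ω (e j)) = p := fun j =>
        (measurePreserving_eval (fun _ : ι => p) (e j)).map_eq
      rw [hev, hev] at hmap
      rw [← hmap, mgf_map ((hm1 _).prodMk (hm1 _)).aemeasurable]
      · rfl
      · exact ((hKmeas.const_mul t).exp).aestronglyMeasurable
    have hind : IndepFun (fun ω : ι → 𝒳 => K (ω (e (Sum.inl k))) (ω (e (Sum.inr k))))
        (fun ω : ι → 𝒳 => ∑ k ∈ s, K (ω (e (Sum.inl k))) (ω (e (Sum.inr k))))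
        (Measure.pi fun _ => p) := by
      have hd : Disjoint (({k} : Finset (Fin m)).disjSum {k}) (s.disjSum s) := by
        rw [Finset.disjoint_left]
        rintro (x | x) hx hx' <;> simp at hx hx' <;> subst hx <;> exact hk hx'
      have h2 := h1.indepFun_finset _ _ hd hm1
      let φ : (↥(({k} : Finset (Fin m)).disjSum {k}) → 𝒳) → ℝ :=
        fun g => K (g ⟨Sum.inl k, by simp⟩) (g ⟨Sum.inr k, by simp⟩)
      let ψ : (↥(s.disjSum s) → 𝒳) → ℝ :=
        fun g => ∑ k : s, K (g ⟨Sum.inl k.1, by simp [k.2]⟩) (g ⟨Sum.inr k.1, by simp [k.2]⟩)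
      have hφ : Measurable φ :=
        meas_K2 hKmeas (measurable_pi_apply _) (measurable_pi_apply _)
      have hψ : Measurable ψ := Finset.measurable_sum _ fun i _ =>
        meas_K2 hKmeas (measurable_pi_apply _) (measurable_pi_apply _)
      have h3 := h2.comp hφ hψ
      convert h3 using 1
      · rfl
      ext ω
      simp only [Function.comp, ψ]
      rw [← Finset.sum_attach s]
      rfl
    have hadd := hind.mgf_add (t := t) ((((hKm k).const_mul t).exp).aestronglyMeasurable)
      ((((Finset.measurable_sum s fun k _ => hKm k).const_mul t).exp).aestronglyMeasurable)
    rw [Finset.card_insert_of_notMem hk, pow_succ', ← ih, ← hsing, ← hadd]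
    congr 1
    ext ω
    simp [Finset.sum_insert hk]

lemma tail_pairs {𝒳 ι R : Type*} [MeasurableSpace 𝒳] [Fintype ι] [Fintype R] [Nonempty R]
    (p : Measure 𝒳) [IsProbabilityMeasure p]
    (K : 𝒳 → 𝒳 → ℝ) (hKmeas : Measurable (Function.uncurry K)) (hKbdd : ∀ x y, |K x y| ≤ 1)
    (ν : ℝ) (hν0 : 0 < ν) (hν : ∫ x, ∫ y, (K x y)^2 ∂p ∂p ≤ ν)
    (m : ℕ) (e : R → Fin m ⊕ Fin m → ι) (he : ∀ r, Function.Injective (e r))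
    (t : ℝ) (ht0 : 0 ≤ t) (ht : t ≤ 3 * ν) (W : (ι → 𝒳) → ℝ)
    (hW : ∀ ω, m * W ω = ∑ r, (Fintype.card R : ℝ)⁻¹ *
      ∑ k, K (ω (e r (Sum.inl k))) (ω (e r (Sum.inr k)))) :
    (Measure.pi fun _ : ι => p).real {ω | (∫ x, ∫ y, K x y ∂p ∂p) + t < W ω} ≤
      Real.exp (- (m * t^2 / (4 * ν))) := by
  set θ := ∫ x, ∫ y, K x y ∂p ∂p with hθ
  set μ := Measure.pi fun _ : ι => p with hμ
  set S : R → (ι → 𝒳) → ℝ := fun r ω => ∑ k, K (ω (e r (Sum.inl k))) (ω (e r (Sum.inr k))) with hS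
  set s := t / (2 * ν) with hs
  have hs0 : 0 ≤ s := by positivity
  have hs1 : s ≤ 3/2 := by rw [hs, div_le_iff₀ (by positivity)]; linarith
  have hSm : ∀ r, Measurable (S r) := fun r => Finset.measurable_sum _ fun k _ =>
    meas_K2 hKmeas (measurable_pi_apply _) (measurable_pi_apply _)
  have hSb : ∀ r ω, S r ω ≤ m := fun r ω => by
    calc S r ω ≤ ∑ k : Fin m, (1:ℝ) := Finset.sum_le_sum fun k _ => (abs_le.1 (hKbdd _ _)).2
      _ = m := by simp
  have hSi : ∀ r, Integrable (fun ω => Real.exp (s * S r ω)) μ := fun r =>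
    Integrable.of_bound ((hSm r).const_mul s).exp.aestronglyMeasurable (Real.exp (s * m))
      (ae_of_all _ fun ω => by
        rw [Real.norm_eq_abs, Real.abs_exp]
        have := hSb r ω
        gcongr)
  set Y : (ι → 𝒳) → ℝ := fun ω => ∑ r, (Fintype.card R : ℝ)⁻¹ * S r ω with hY
  have hcard : (0:ℝ) < Fintype.card R := by exact_mod_cast Fintype.card_pos
  have hw1 : ∑ r : R, (Fintype.card R : ℝ)⁻¹ = 1 := by
    simp [hcard.ne']
  have hYm : Measurable Y := Finset.measurable_sum _ fun r _ => (hSm r).const_mul _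
  have hjen : ∀ ω, Real.exp (s * Y ω) ≤ ∑ r, (Fintype.card R : ℝ)⁻¹ * Real.exp (s * S r ω) := by
    intro ω
    have := convexOn_exp.map_sum_le (t := Finset.univ) (w := fun _ : R => (Fintype.card R : ℝ)⁻¹)
      (p := fun r => s * S r ω) (fun _ _ => by positivity) hw1 (fun _ _ => Set.mem_univ _)
    simp only [smul_eq_mul] at this
    have h' : s * Y ω = ∑ r, (Fintype.card R : ℝ)⁻¹ * (s * S r ω) := by
      simp only [hY]
      rw [Finset.mul_sum]
      exact Finset.sum_congr rfl fun r _ => by ring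
    rw [h']
    exact this
  have hRi : Integrable (fun ω => ∑ r, (Fintype.card R : ℝ)⁻¹ * Real.exp (s * S r ω)) μ :=
    integrable_finsetSum _ fun r _ => (hSi r).const_mul _
  have hYi : Integrable (fun ω => Real.exp (s * Y ω)) μ :=
    hRi.mono' (hYm.const_mul s).exp.aestronglyMeasurable (ae_of_all _ fun ω => by
      rw [Real.norm_eq_abs, Real.abs_exp]; exact hjen ω)
  have hM := mgf_K p K hKmeas hKbdd ν hν s hs0 hs1
  have hmgf : mgf Y μ s ≤ Real.exp (m * (s * θ + s^2 * ν)) := by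
    calc mgf Y μ s ≤ ∫ ω, ∑ r, (Fintype.card R : ℝ)⁻¹ * Real.exp (s * S r ω) ∂μ :=
          integral_mono hYi hRi hjen
      _ = ∑ r : R, (Fintype.card R : ℝ)⁻¹ * mgf (S r) μ s := by
          rw [integral_finsetSum _ fun r _ => (hSi r).const_mul _]
          simp_rw [integral_const_mul]
          rfl
      _ = ∑ r : R, (Fintype.card R : ℝ)⁻¹ * (mgf (Function.uncurry K) (p.prod p) s) ^ m := by
          refine Finset.sum_congr rfl fun r _ => ?_
          have := mgf_pairs p K hKmeas m (e r) (he r) s Finset.univ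
          simp only [Finset.card_univ, Fintype.card_fin] at this
          rw [← this]
      _ = (mgf (Function.uncurry K) (p.prod p) s) ^ m := by
          rw [← Finset.sum_mul, hw1, one_mul]
      _ ≤ (Real.exp (s * θ + s^2 * ν)) ^ m := pow_le_pow_left₀ mgf_nonneg hM m
      _ = _ := by rw [← Real.exp_nat_mul]
  have hch := measure_ge_le_exp_mul_mgf (μ := μ) (X := Y) (m * (θ + t)) hs0 hYi
  calc μ.real {ω | θ + t < W ω} ≤ μ.real {ω | m * (θ + t) ≤ Y ω} := by
        apply measureReal_mono _ (measure_ne_top _ _)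
        intro ω hω
        have hω' : θ + t < W ω := hω
        have h2 : (m:ℝ) * (θ + t) ≤ m * W ω := by gcongr
        rw [hW] at h2
        exact h2
    _ ≤ _ := hch
    _ ≤ Real.exp (-s * (m * (θ + t))) * Real.exp (m * (s * θ + s^2 * ν)) := by gcongr
    _ = _ := by
        rw [← Real.exp_add]
        congr 1
        rw [hs]
        field_simp
        ring

lemma perm_sum {n : ℕ} (f : Fin n → Fin n → ℝ) {a b : Fin n} (hab : a ≠ b) :
    (n:ℝ) * (n - 1) * ∑ σ : Equiv.Perm (Fin n), f (σ a) (σ b) =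
      (Fintype.card (Equiv.Perm (Fin n)) : ℝ) * (∑ i, ∑ j, f i j - ∑ i, f i i) := by
  have hconst : ∀ i j, i ≠ j → ∑ σ : Equiv.Perm (Fin n), f (σ i) (σ j) =
      ∑ σ : Equiv.Perm (Fin n), f (σ a) (σ b) := by
    intro i j hij
    obtain ⟨τ, h1, h2⟩ : ∃ τ : Equiv.Perm (Fin n), τ a = i ∧ τ b = j := by
      refine ⟨Equiv.swap (Equiv.swap a i b) j * Equiv.swap a i, ?_, ?_⟩
      · simp only [Equiv.Perm.mul_apply, Equiv.swap_apply_left]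
        apply Equiv.swap_apply_of_ne_of_ne _ hij
        intro h
        have : Equiv.swap a i a = Equiv.swap a i b := by rw [Equiv.swap_apply_left]; exact h
        exact hab ((Equiv.swap a i).injective this)
      · simp
    rw [← Equiv.sum_comp (Equiv.mulRight τ) (fun σ : Equiv.Perm (Fin n) => f (σ a) (σ b))]
    simp [h1, h2]
  have hoff : ∀ g : Fin n → Fin n → ℝ, ∑ i, ∑ j, g i j - ∑ i, g i i
      = ∑ x ∈ (Finset.univ : Finset (Fin n)).offDiag, g x.1 x.2 := by
    intro g
    have h := Finset.sum_union (f := fun x : Fin n × Fin n => g x.1 x.2)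
      (Finset.disjoint_diag_offDiag (Finset.univ : Finset (Fin n)))
    rw [Finset.diag_union_offDiag, Finset.sum_product, Finset.sum_diag] at h
    rw [h]; ring
  have h1 : ∑ x ∈ (Finset.univ : Finset (Fin n)).offDiag,
      ∑ σ : Equiv.Perm (Fin n), f (σ x.1) (σ x.2) =
      (n:ℝ) * (n - 1) * ∑ σ : Equiv.Perm (Fin n), f (σ a) (σ b) := by
    rw [Finset.sum_congr rfl (fun x hx => hconst x.1 x.2 (Finset.mem_offDiag.1 hx).2.2)]
    rw [Finset.sum_const, Finset.offDiag_card, nsmul_eq_mul]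
    congr 1
    simp only [Finset.card_univ, Fintype.card_fin]
    rw [Nat.cast_sub (Nat.le_mul_self n)]
    push_cast; ring
  rw [← h1, Finset.sum_comm]
  have h2 : ∀ σ : Equiv.Perm (Fin n), ∑ x ∈ (Finset.univ : Finset (Fin n)).offDiag,
      f (σ x.1) (σ x.2) = ∑ i, ∑ j, f i j - ∑ i, f i i := by
    intro σ
    rw [← hoff (fun i j => f (σ i) (σ j))]
    rw [Equiv.sum_comp σ (fun i => f i i), Equiv.sum_comp σ (fun i => ∑ j, f i (σ j))]
    congr 1
    exact Finset.sum_congr rfl fun i _ => Equiv.sum_comp σ (fun j => f i j)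
  rw [Finset.sum_congr rfl fun σ _ => h2 σ]
  rw [Finset.sum_const, Finset.card_univ, nsmul_eq_mul]

lemma U_tail {𝒳 ι : Type*} [MeasurableSpace 𝒳] [Fintype ι]
    (p : Measure 𝒳) [IsProbabilityMeasure p]
    (K : 𝒳 → 𝒳 → ℝ) (hKmeas : Measurable (Function.uncurry K)) (hKbdd : ∀ x y, |K x y| ≤ 1)
    (ν : ℝ) (hν0 : 0 < ν) (hν : ∫ x, ∫ y, (K x y)^2 ∂p ∂p ≤ ν)
    (n : ℕ) (hn : 1 < n) (j : Fin n → ι) (hj : Function.Injective j)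
    (t : ℝ) (ht0 : 0 ≤ t) (ht : t ≤ 3 * ν) :
    (Measure.pi fun _ : ι => p).real {ω | (∫ x, ∫ y, K x y ∂p ∂p) + t <
      (∑ i, ∑ k, K (ω (j i)) (ω (j k)) - ∑ i, K (ω (j i)) (ω (j i))) / (n * (n - 1))} ≤
      Real.exp (- (((n / 2 : ℕ) : ℝ) * t^2 / (4 * ν))) := by
  have hlt0 : ∀ k : Fin (n / 2), 2 * k.1 < n := fun k => by have := k.2; omega
  have hlt1 : ∀ k : Fin (n / 2), 2 * k.1 + 1 < n := fun k => by have := k.2; omega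
  let g : Fin (n/2) ⊕ Fin (n/2) → Fin n :=
    Sum.elim (fun k => ⟨2 * k.1, hlt0 k⟩) (fun k => ⟨2 * k.1 + 1, hlt1 k⟩)
  have hg : Function.Injective g := by
    rintro (x | x) (y | y) h <;> simp [g, Fin.ext_iff] at h ⊢ <;> omega
  have hn' : (1:ℝ) < n := by exact_mod_cast hn
  refine tail_pairs (R := Equiv.Perm (Fin n)) p K hKmeas hKbdd ν hν0 hν (n / 2)
    (fun r x => j (r (g x))) (fun r => hj.comp (r.injective.comp hg)) t ht0 ht _ ?_
  intro ω
  have hcard : (0:ℝ) < Fintype.card (Equiv.Perm (Fin n)) := by exact_mod_cast Fintype.card_pos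
  have h : ∀ k : Fin (n/2), ∑ σ : Equiv.Perm (Fin n),
      K (ω (j (σ (g (Sum.inl k))))) (ω (j (σ (g (Sum.inr k))))) =
      (Fintype.card (Equiv.Perm (Fin n)) : ℝ) *
      ((∑ i, ∑ k, K (ω (j i)) (ω (j k)) - ∑ i, K (ω (j i)) (ω (j i))) / (n * (n - 1))) := by
    intro k
    have := perm_sum (fun a b => K (ω (j a)) (ω (j b)))
      (a := g (Sum.inl k)) (b := g (Sum.inr k)) (fun h => by simpa using hg h)
    rw [← mul_div_assoc, ← this]
    have h1 : (n:ℝ) ≠ 0 := by linarith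
    have h2 : (n:ℝ) - 1 ≠ 0 := by linarith
    field_simp
  rw [← Finset.mul_sum, Finset.sum_comm (s := (Finset.univ : Finset (Equiv.Perm (Fin n)))), Finset.sum_congr rfl fun k _ => h k]
  simp only [Finset.sum_const, Finset.card_univ, Fintype.card_fin, nsmul_eq_mul]
  rw [mul_left_comm, inv_mul_cancel_left₀ hcard.ne']

lemma V_tail {𝒳 ι : Type*} [MeasurableSpace 𝒳] [Fintype ι]
    (p : Measure 𝒳) [IsProbabilityMeasure p]
    (K : 𝒳 → 𝒳 → ℝ) (hKmeas : Measurable (Function.uncurry K)) (hKbdd : ∀ x y, |K x y| ≤ 1)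
    (ν : ℝ) (hν0 : 0 < ν) (hν : ∫ x, ∫ y, (K x y)^2 ∂p ∂p ≤ ν)
    (nX nY : ℕ) (hX : 0 < nX) (hY : 0 < nY) (j : Fin nX ⊕ Fin nY → ι) (hj : Function.Injective j)
    (t : ℝ) (ht0 : 0 ≤ t) (ht : t ≤ 3 * ν) :
    (Measure.pi fun _ : ι => p).real {ω | (∫ x, ∫ y, K x y ∂p ∂p) + t <
      (∑ i, ∑ k, K (ω (j (Sum.inl i))) (ω (j (Sum.inr k)))) / (nX * nY)} ≤
      Real.exp (- (((min nX nY : ℕ) : ℝ) * t^2 / (4 * ν))) := by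
  have : NeZero nX := ⟨hX.ne'⟩
  have : NeZero nY := ⟨hY.ne'⟩
  let g : Fin nX × Fin nY → Fin (min nX nY) ⊕ Fin (min nX nY) → Fin nX ⊕ Fin nY := fun r =>
    Sum.elim (fun k => Sum.inl (Fin.castLE (min_le_left _ _) k + r.1))
      (fun k => Sum.inr (Fin.castLE (min_le_right _ _) k + r.2))
  have hg : ∀ r, Function.Injective (g r) := by
    rintro r (x | x) (y | y) h <;> simpa [g] using h
  refine tail_pairs (R := Fin nX × Fin nY) p K hKmeas hKbdd ν hν0 hν (min nX nY)
    (fun r x => j (g r x)) (fun r => hj.comp (hg r)) t ht0 ht _ ?_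
  intro ω
  have h : ∀ k : Fin (min nX nY), ∑ r : Fin nX × Fin nY,
      K (ω (j (g r (Sum.inl k)))) (ω (j (g r (Sum.inr k)))) =
      ∑ i, ∑ k, K (ω (j (Sum.inl i))) (ω (j (Sum.inr k))) := by
    intro k
    rw [Fintype.sum_prod_type]
    simp only [g, Sum.elim_inl, Sum.elim_inr]
    rw [← Equiv.sum_comp (Equiv.addLeft (Fin.castLE (min_le_left nX nY) k))
      (fun i => ∑ k, K (ω (j (Sum.inl i))) (ω (j (Sum.inr k))))]
    refine Finset.sum_congr rfl fun i _ => ?_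
    rw [← Equiv.sum_comp (Equiv.addLeft (Fin.castLE (min_le_right nX nY) k))
      (fun k => K _ (ω (j (Sum.inr k))))]
    rfl
  rw [← Finset.mul_sum, Finset.sum_comm (s := (Finset.univ : Finset (Fin nX × Fin nY))), Finset.sum_congr rfl fun k _ => h k]
  simp only [Finset.sum_const, Finset.card_univ, Fintype.card_fin, nsmul_eq_mul,
    Fintype.card_prod, Nat.cast_mul]
  ring

lemma det_bound (a x y θ t DX DY AX AY V : ℝ) (ha : 0 < a) (hx : a + 1 ≤ x) (hy : a + 1 ≤ y)
    (ht : 0 ≤ t) (hθ : -1 ≤ θ) (hDX : DX ≤ x) (hDY : DY ≤ y)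
    (hX : (AX - DX) / (x * (x - 1)) ≤ θ + t) (hY : (AY - DY) / (y * (y - 1)) ≤ θ + t)
    (hV : -V / (x * y) ≤ -θ + t) :
    1 / x^2 * AX + 1 / y^2 * AY - 2 / (x * y) * V ≤ 4 / a + 4 * t := by
  have key : ∀ z A D : ℝ, a + 1 ≤ z → D ≤ z → (A - D) / (z * (z - 1)) ≤ θ + t →
      1 / z^2 * A ≤ θ + t + 2 / a := by
    intro z A D hz hD h
    have hz0 : 0 < z := by linarith
    have hz1 : 0 < z - 1 := by linarith
    rw [div_le_iff₀ (by positivity)] at h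
    have h1 : A ≤ (θ + t) * (z * (z - 1)) + z := by linarith
    have h2 : 1 / z^2 * A ≤ 1 / z^2 * ((θ + t) * (z * (z - 1)) + z) := by gcongr
    have h3 : 1 / z^2 * ((θ + t) * (z * (z - 1)) + z) = θ + t + (1 - (θ + t)) * (1 / z) := by
      field_simp; ring
    have h4 : (1 - (θ + t)) * (1 / z) ≤ 2 * (1 / z) := by gcongr; linarith
    have h5 : 1 / z ≤ 1 / a := by gcongr; linarith
    have h6 : 2 / a = 2 * (1 / a) := by ring
    linarith
  have k1 := key x AX DX hx hDX hX
  have k2 := key y AY DY hy hDY hY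
  have h7 : 2 / (x * y) * V = - (2 * (-V / (x * y))) := by ring
  have h8 : 4 / a = 2 / a + 2 / a := by ring
  linarith

/-- Proposition B.1 part 1: under `H₀ : p = q`, for `0 < λ < 3√(cνn)`,
with probability at least `1 − 3e^{−λ²/8}`, `T̂ ≤ 4/(cn) + 4λ√(ν/(cn))`. -/
theorem mmd_concentration_H0
    {d : ℕ} (𝒳 : Set (EuclideanSpace ℝ (Fin d))) (h𝒳 : MeasurableSet 𝒳)
    (K : 𝒳 → 𝒳 → ℝ)
    (hKmeas : Measurable (Function.uncurry K))
    (hKsym : ∀ x y, K x y = K y x)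
    (hKpsd : ∀ (m : ℕ) (z : Fin m → 𝒳) (a : Fin m → ℝ),
      0 ≤ ∑ i, ∑ j, a i * a j * K (z i) (z j))
    (hKbdd : ∀ x y, |K x y| ≤ 1)
    (p q : Measure 𝒳) [IsProbabilityMeasure p] [IsProbabilityMeasure q]
    (ν : ℝ) (hν1 : ν ≤ 1)
    (hνpp : ∫ x, ∫ y, (K x y)^2 ∂p ∂p ≤ ν)
    (hνpq : ∫ x, ∫ y, (K x y)^2 ∂q ∂p ≤ ν)
    (hνqq : ∫ x, ∫ y, (K x y)^2 ∂q ∂q ≤ ν)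
    (nX nY : ℕ) (c : ℝ) (hc : 0 < c) (hc1 : c < 1)
    (hbalX : c * ((nX + nY : ℕ) : ℝ) + 1 ≤ (nX : ℝ))
    (hbalY : c * ((nX + nY : ℕ) : ℝ) + 1 ≤ (nY : ℝ))
    (hH0 : p = q)
    (lam : ℝ) (hlam : 0 < lam)
    (hlam' : lam < 3 * Real.sqrt (c * ν * ((nX + nY : ℕ) : ℝ))) :
    1 - ENNReal.ofReal (3 * Real.exp (-lam^2 / 8)) ≤
      ((Measure.pi fun _ : Fin nX => p).prod (Measure.pi fun _ : Fin nY => q))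
        {ω : (Fin nX → 𝒳) × (Fin nY → 𝒳) |
          mmdStat K nX nY ω ≤
            4/(c * ((nX + nY : ℕ) : ℝ))
            + 4 * lam * Real.sqrt (ν/(c * ((nX + nY : ℕ) : ℝ)))} := by
  subst hH0
  have hn0 : 0 < nX := by
    rcases Nat.eq_zero_or_pos nX with h | h
    · have : (0:ℝ) ≤ c * ((nX + nY : ℕ) : ℝ) := by positivity
      rw [h] at hbalX this; norm_num at hbalX this; linarith
    · exact h
  set a := c * ((nX + nY : ℕ) : ℝ) with ha_def
  have hNpos : (0:ℝ) < ((nX + nY : ℕ) : ℝ) := by exact_mod_cast (by omega : 0 < nX + nY)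
  have ha : 0 < a := by positivity
  have hν0 : 0 < ν := by
    by_contra hneg
    push Not at hneg
    have h1 : c * ν * ((nX + nY : ℕ) : ℝ) ≤ 0 := by
      have : c * ν * ((nX + nY : ℕ) : ℝ) = a * ν := by rw [ha_def]; ring
      rw [this]; exact mul_nonpos_of_nonneg_of_nonpos ha.le hneg
    rw [Real.sqrt_eq_zero_of_nonpos h1] at hlam'
    linarith
  set t := lam * Real.sqrt (ν / a) with ht_def
  have ht0 : 0 ≤ t := by positivity
  have ht2 : a * t^2 = lam^2 * ν := by
    rw [ht_def, mul_pow, Real.sq_sqrt (by positivity)]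
    field_simp
  have ht3 : t ≤ 3 * ν := by
    have e1 : c * ν * ((nX + nY : ℕ) : ℝ) = a * ν := by rw [ha_def]; ring
    rw [e1] at hlam'
    have h1 : t ≤ 3 * Real.sqrt (a * ν) * Real.sqrt (ν / a) := by
      rw [ht_def]; gcongr
    rw [mul_assoc, ← Real.sqrt_mul (by positivity)] at h1
    have e2 : a * ν * (ν / a) = ν^2 := by field_simp
    rwa [e2, Real.sqrt_sq hν0.le] at h1
  have hX1 : 1 < nX := by
    have : (1:ℝ) < nX := by linarith
    exact_mod_cast this
  have hY1 : 1 < nY := by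
    have : (1:ℝ) < nY := by linarith
    exact_mod_cast this
  have hexp : ∀ m : ℕ, a / 2 ≤ (m:ℝ) →
      Real.exp (- ((m:ℝ) * t^2 / (4 * ν))) ≤ Real.exp (-lam^2 / 8) := by
    intro m hm
    apply Real.exp_le_exp.2
    have h1 : a / 2 * t^2 / (4 * ν) ≤ (m:ℝ) * t^2 / (4 * ν) := by gcongr
    have h2 : a / 2 * t^2 / (4 * ν) = lam^2 / 8 := by
      rw [show a / 2 * t^2 = (a * t^2) / 2 by ring, ht2]
      field_simp
      norm_num
    rw [neg_div]
    linarith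
  have hhalf : ∀ n : ℕ, a + 1 ≤ (n:ℝ) → a / 2 ≤ ((n / 2 : ℕ) : ℝ) := by
    intro n hn
    have h1 : n ≤ 2 * (n / 2) + 1 := by omega
    have h2 : (n:ℝ) ≤ 2 * ((n / 2 : ℕ) : ℝ) + 1 := by exact_mod_cast h1
    linarith
  have hmin : a / 2 ≤ ((min nX nY : ℕ) : ℝ) := by
    rw [Nat.cast_min]
    apply le_min <;> linarith
  set θ := ∫ x, ∫ y, K x y ∂p ∂p with hθ_def
  have hθ : -1 ≤ θ := by
    have h1 : ∀ x, ‖∫ y, K x y ∂p‖ ≤ 1 := fun x => by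
      simpa using norm_integral_le_of_norm_le_const (μ := p) (f := fun y => K x y) (C := 1)
        (ae_of_all _ fun y => hKbdd x y)
    have h2 : ‖θ‖ ≤ 1 := by
      simpa using norm_integral_le_of_norm_le_const (μ := p) (ae_of_all _ h1)
    exact (abs_le.1 h2).1
  let ι := Fin nX ⊕ Fin nY
  set μ := Measure.pi fun _ : ι => p with hμ
  have hUX := (U_tail p K hKmeas hKbdd ν hν0 hνpp nX hX1 (Sum.inl : Fin nX → ι)
    Sum.inl_injective t ht0 ht3).trans (hexp _ (hhalf _ hbalX))
  have hUY := (U_tail p K hKmeas hKbdd ν hν0 hνpp nY hY1 (Sum.inr : Fin nY → ι)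
    Sum.inr_injective t ht0 ht3).trans (hexp _ (hhalf _ hbalY))
  have hV := (V_tail p (fun x y => - K x y) hKmeas.neg (fun x y => by rw [abs_neg]; exact hKbdd x y)
    ν hν0 (by simpa using hνpp) nX nY (by omega) (by omega) (id : ι → ι)
    Function.injective_id t ht0 ht3).trans (hexp _ hmin)
  set BX := {ω : ι → 𝒳 | θ + t < (∑ i : Fin nX, ∑ k : Fin nX, K (ω (Sum.inl i)) (ω (Sum.inl k))
    - ∑ i : Fin nX, K (ω (Sum.inl i)) (ω (Sum.inl i))) / (nX * (nX - 1))} with hBX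
  set BY := {ω : ι → 𝒳 | θ + t < (∑ i : Fin nY, ∑ k : Fin nY, K (ω (Sum.inr i)) (ω (Sum.inr k))
    - ∑ i : Fin nY, K (ω (Sum.inr i)) (ω (Sum.inr i))) / (nY * (nY - 1))} with hBY
  set BV := {ω : ι → 𝒳 | (∫ x, ∫ y, - K x y ∂p ∂p) + t <
    (∑ i : Fin nX, ∑ k : Fin nY, - K (ω (id (Sum.inl i))) (ω (id (Sum.inr k)))) / (nX * nY)} with hBV
  have hmp := measurePreserving_sumPiEquivProdPi (fun _ : ι => p)
  rw [← hmp.measure_preimage_equiv]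
  set G := (MeasurableEquiv.sumPiEquivProdPi fun _ : ι => 𝒳) ⁻¹'
    {ω : (Fin nX → 𝒳) × (Fin nY → 𝒳) |
          mmdStat K nX nY ω ≤ 4 / a + 4 * lam * Real.sqrt (ν / a)} with hG
  have hcover : (Set.univ : Set (ι → 𝒳)) ⊆ G ∪ (BX ∪ BY ∪ BV) := by
    intro ω _
    by_cases h1 : ω ∈ BX
    · exact Or.inr (Or.inl (Or.inl h1))
    by_cases h2 : ω ∈ BY
    · exact Or.inr (Or.inl (Or.inr h2))
    by_cases h3 : ω ∈ BV
    · exact Or.inr (Or.inr h3)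
    left
    rw [hBX, Set.mem_ofPred_eq, not_lt] at h1
    rw [hBY, Set.mem_ofPred_eq, not_lt] at h2
    rw [hBV, Set.mem_ofPred_eq, not_lt] at h3
    simp only [integral_neg, id, Finset.sum_neg_distrib] at h3
    have hd : ∀ (n : ℕ) (z : Fin n → 𝒳), ∑ i, K (z i) (z i) ≤ (n:ℝ) := fun n z => by
      calc ∑ i, K (z i) (z i) ≤ ∑ _i : Fin n, (1:ℝ) :=
            Finset.sum_le_sum fun k _ => (abs_le.1 (hKbdd _ _)).2
        _ = n := by simp
    have := det_bound a nX nY θ t _ _ _ _ _ ha hbalX hbalY ht0 hθ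
      (hd nX fun i => ω (Sum.inl i)) (hd nY fun i => ω (Sum.inr i)) h1 h2 h3
    have hfin : mmdStat K nX nY (MeasurableEquiv.sumPiEquivProdPi (fun _ : ι => 𝒳) ω) ≤
        4 / a + 4 * lam * Real.sqrt (ν / a) := by
      rw [mul_assoc, ← ht_def]
      exact this
    exact hfin
  have hle : ∀ B : Set (ι → 𝒳), μ.real B ≤ Real.exp (-lam^2 / 8) →
      μ B ≤ ENNReal.ofReal (Real.exp (-lam^2 / 8)) := fun B hB => by
    rw [← ofReal_measureReal (measure_ne_top μ B)]
    exact ENNReal.ofReal_le_ofReal hB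
  have hE : ENNReal.ofReal (3 * Real.exp (-lam^2 / 8)) = ENNReal.ofReal (Real.exp (-lam^2 / 8))
      + ENNReal.ofReal (Real.exp (-lam^2 / 8)) + ENNReal.ofReal (Real.exp (-lam^2 / 8)) := by
    rw [← ENNReal.ofReal_add (by positivity) (by positivity),
      ← ENNReal.ofReal_add (by positivity) (by positivity)]
    congr 1; ring
  rw [tsub_le_iff_right, hE]
  calc (1 : ℝ≥0∞) = μ Set.univ := by simp
    _ ≤ μ (G ∪ (BX ∪ BY ∪ BV)) := measure_mono hcover
    _ ≤ μ G + μ (BX ∪ BY ∪ BV) := measure_union_le _ _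
    _ ≤ μ G + (μ BX + μ BY + μ BV) := by
        gcongr
        exact (measure_union_le _ _).trans (by gcongr; exact measure_union_le _ _)
    _ ≤ _ := by
        gcongr
        · exact hle _ hUX
        · exact hle _ hUY
        · exact hle _ hV
end

section
/- (Proposition B.1, part 2: concentration of T̂ under H1.) Assume p ≠ q with δ_K > 0. Then for any 0 < λ < 3 √(c ν n), with probability at least 1 − 3 e^{−λ²/8} under the product law p^{⊗n_X} ⊗ q^{⊗n_Y}, T̂ ≥ δ_K − 4 λ √(ν/(c n)). -/
open MeasureTheory Real
open scoped BigOperators ENNReal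

section aux
variable {α : Type*} [MeasurableSpace α]

lemma aux_int_bdd (μ : Measure α) [IsFiniteMeasure μ] {f : α → ℝ} (hf : Measurable f) (C : ℝ)
    (hC : ∀ x, |f x| ≤ C) : Integrable f μ :=
  Integrable.of_bound hf.aestronglyMeasurable C (Filter.Eventually.of_forall hC)

lemma aux_psd_integral (ρ : Measure α) [IsProbabilityMeasure ρ] (G : α → α → ℝ)
    (hG : Measurable (Function.uncurry G)) (C : ℝ) (hC : ∀ x y, |G x y| ≤ C)
    (hpsd : ∀ (m : ℕ) (z : Fin m → α), 0 ≤ ∑ i, ∑ j, G (z i) (z j)) :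
    0 ≤ ∫ x, ∫ y, G x y ∂ρ ∂ρ := by
  set I := ∫ x, ∫ y, G x y ∂ρ ∂ρ with hI
  have hIp : ∫ z, Function.uncurry G z ∂(ρ.prod ρ) = I :=
    integral_prod _ (aux_int_bdd _ hG C (fun z => hC z.1 z.2))
  set D := ∫ x, G x x ∂ρ with hD
  have key : ∀ m : ℕ, 0 ≤ (m : ℝ) * ((m : ℝ) - 1) * I + m * D := by
    intro m
    have hint : ∀ i j : Fin m, ∫ z, G (z i) (z j) ∂(Measure.pi fun _ : Fin m => ρ)
        = if i = j then D else I := by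
      intro i j
      split_ifs with h
      · subst h
        have hm := measurePreserving_eval (fun _ : Fin m => ρ) i
        have hg : Measurable (fun x => G x x) := hG.comp (measurable_id.prodMk measurable_id)
        have e := integral_map (μ := Measure.pi fun _ : Fin m => ρ) hm.measurable.aemeasurable
          (f := fun x => G x x) hg.aestronglyMeasurable
        rw [hm.map_eq] at e
        exact e.symm
      · have hind := (ProbabilityTheory.iIndepFun_pi (μ := fun _ : Fin m => ρ)
          (X := fun _ x => x) (fun _ => aemeasurable_id)).indepFun h
        have hmi := measurePreserving_eval (fun _ : Fin m => ρ) i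
        have hmj := measurePreserving_eval (fun _ : Fin m => ρ) j
        rw [ProbabilityTheory.indepFun_iff_map_prod_eq_prod_map_map
          (measurable_pi_apply i).aemeasurable (measurable_pi_apply j).aemeasurable] at hind
        have e1 : Measure.map (fun ω : Fin m → α => ω i) (Measure.pi fun _ : Fin m => ρ) = ρ :=
          hmi.map_eq
        have e2 : Measure.map (fun ω : Fin m → α => ω j) (Measure.pi fun _ : Fin m => ρ) = ρ :=
          hmj.map_eq
        rw [e1, e2] at hind
        rw [← hIp, ← hind, integral_map
          ((measurable_pi_apply i).prodMk (measurable_pi_apply j)).aemeasurable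
          hG.aestronglyMeasurable]
        rfl
    have hii : ∀ i j : Fin m, Integrable (fun z : Fin m → α => G (z i) (z j))
        (Measure.pi fun _ : Fin m => ρ) := fun i j =>
      aux_int_bdd _ (show Measurable (fun z : Fin m → α => Function.uncurry G (z i, z j)) from
        hG.comp ((measurable_pi_apply i).prodMk (measurable_pi_apply j))) C (fun z => hC _ _)
    have h0 : 0 ≤ ∫ z, ∑ i, ∑ j, G (z i) (z j) ∂(Measure.pi fun _ : Fin m => ρ) :=
      integral_nonneg (fun z => hpsd m z)
    rw [integral_finsetSum _ (fun i _ => integrable_finsetSum _ (fun j _ => hii i j))] at h0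
    have h1 : ∀ i : Fin m, ∫ z, ∑ j, G (z i) (z j) ∂(Measure.pi fun _ : Fin m => ρ)
        = D + (m - 1) * I := by
      intro i
      rw [integral_finsetSum _ (fun j _ => hii i j)]
      simp_rw [hint]
      have : ∀ j : Fin m, (if i = j then D else I) = (if i = j then D - I else 0) + I := by
        intro j; split_ifs <;> ring
      simp_rw [this]
      rw [Finset.sum_add_distrib, Finset.sum_ite_eq]
      simp
      ring
    simp_rw [h1] at h0
    simp at h0
    linarith
  by_contra hneg
  push Not at hneg
  obtain ⟨m, hm⟩ := exists_nat_gt (|D| / (-I) + 1)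
  have hm1 : |D| / (-I) < m - 1 := by linarith
  rw [div_lt_iff₀ (by linarith)] at hm1
  have hmpos : (0:ℝ) < m := lt_of_le_of_lt (by have := abs_nonneg D; have : 0 ≤ |D| / (-I) := div_nonneg this (by linarith); linarith) hm
  have := key m
  have h3 : 0 < (m:ℝ) * (((m:ℝ) - 1) * (-I) - |D|) := mul_pos hmpos (by linarith)
  have h4 : (m:ℝ) * D ≤ m * |D| := by gcongr; exact le_abs_self D
  nlinarith

lemma aux_prod_int (p q : Measure α) [IsProbabilityMeasure p] [IsProbabilityMeasure q]
    (u v : α → ℝ) (hu : Integrable u p) (hv : Integrable v q) (c : ℝ) :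
    ∫ z, (c + u z.1 - v z.2) ∂(p.prod q) = c + ∫ x, u x ∂p - ∫ x, v x ∂q := by
  have h1 : Integrable (fun z : α × α => u z.1) (p.prod q) := hu.comp_fst q
  have h2 : Integrable (fun z : α × α => v z.2) (p.prod q) := hv.comp_snd p
  have h3 : Integrable (fun z : α × α => c + u z.1) (p.prod q) := (integrable_const c).add h1
  rw [integral_sub h3 h2, integral_add (integrable_const c) h1]
  rw [integral_fun_fst, integral_fun_snd]
  simp

/-- empirical witness function. -/
noncomputable def auxF (K : α → α → ℝ) (nX nY : ℕ) (ω : (Fin nX → α) × (Fin nY → α)) (x : α) : ℝ :=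
  (1/(nX:ℝ)) * ∑ i, K (ω.1 i) x - (1/(nY:ℝ)) * ∑ j, K (ω.2 j) x

lemma aux_psdG (K : α → α → ℝ) (hKsym : ∀ x y, K x y = K y x)
    (hKpsd : ∀ (m : ℕ) (z : Fin m → α) (a : Fin m → ℝ),
      0 ≤ ∑ i, ∑ j, a i * a j * K (z i) (z j)) (nX nY : ℕ) (ω : (Fin nX → α) × (Fin nY → α))
    (hX : (nX:ℝ) ≠ 0) (hY : (nY:ℝ) ≠ 0)
    (m : ℕ) (z : Fin m → α × α) :
    0 ≤ ∑ i, ∑ j, ((mmdStat K nX nY ω - auxF K nX nY ω (z i).1 + auxF K nX nY ω (z i).2)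
      + (- auxF K nX nY ω (z j).1 + K (z i).1 (z j).1 - K (z i).2 (z j).1)
      - (- auxF K nX nY ω (z j).2 + K (z i).1 (z j).2 - K (z i).2 (z j).2)) := by
  have gen : ∀ (ι : Type) [Fintype ι] (w : ι → α) (a : ι → ℝ),
      0 ≤ ∑ i, ∑ j, a i * a j * K (w i) (w j) := by
    intro ι _ w a
    have e := (Fintype.equivFin ι).symm
    have := hKpsd _ (w ∘ e) (a ∘ e)
    simp only [Function.comp] at this
    rw [← e.sum_comp]
    simp_rw [← e.sum_comp (fun j => a _ * a j * K (w _) (w j))]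
    exact this
  have h := gen ((Fin nX ⊕ Fin nY) ⊕ (Fin m ⊕ Fin m))
    (Sum.elim (Sum.elim ω.1 ω.2) (Sum.elim (fun k => (z k).1) (fun k => (z k).2)))
    (Sum.elim (Sum.elim (fun _ => (m:ℝ)/nX) (fun _ => -(m:ℝ)/nY))
      (Sum.elim (fun _ => -1) (fun _ => 1)))
  simp only [Fintype.sum_sum_type, Sum.elim_inl, Sum.elim_inr, Finset.sum_add_distrib,
    ← Finset.mul_sum] at h
  unfold mmdStat auxF
  simp only [Finset.sum_add_distrib, Finset.sum_sub_distrib, Finset.sum_neg_distrib,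
    ← Finset.mul_sum, Finset.sum_const, Finset.card_univ, Fintype.card_fin, nsmul_eq_mul]
  have sw : ∀ (k l : ℕ) (u : Fin k → α) (v : Fin l → α),
      ∑ i, ∑ j, K (u i) (v j) = ∑ j, ∑ i, K (v j) (u i) := by
    intro k l u v
    rw [Finset.sum_comm]
    simp_rw [hKsym]
  rw [sw m nX (fun k => (z k).1) ω.1, sw m nX (fun k => (z k).2) ω.1,
    sw m nY (fun k => (z k).1) ω.2, sw m nY (fun k => (z k).2) ω.2, sw nY nX ω.2 ω.1,
    sw m m (fun k => (z k).2) (fun k => (z k).1)] at h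
  rw [sw m m (fun k => (z k).2) (fun k => (z k).1)]
  rw [Finset.sum_comm (f := fun (x : Fin m) (i : Fin nX) => K (ω.1 i) (z x).1),
    Finset.sum_comm (f := fun (x : Fin m) (i : Fin nX) => K (ω.1 i) (z x).2),
    Finset.sum_comm (f := fun (x : Fin m) (i : Fin nY) => K (ω.2 i) (z x).1),
    Finset.sum_comm (f := fun (x : Fin m) (i : Fin nY) => K (ω.2 i) (z x).2)]
  refine h.trans_eq ?_
  field_simp
  ring

/-- population witness function. -/
noncomputable def auxH (K : α → α → ℝ) (p q : Measure α) (x : α) : ℝ :=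
  (∫ y, K x y ∂p) - ∫ y, K x y ∂q

lemma aux_meas_int (K : α → α → ℝ) (hK : Measurable (Function.uncurry K)) (p : Measure α)
    [IsProbabilityMeasure p] : Measurable (fun x => ∫ y, K x y ∂p) :=
  (StronglyMeasurable.integral_prod_right (f := K) hK.stronglyMeasurable).measurable

lemma aux_bdd_int (f : α → ℝ) (p : Measure α) [IsProbabilityMeasure p] (hf : ∀ x, |f x| ≤ 1) :
    |∫ y, f y ∂p| ≤ 1 := by
  have := norm_integral_le_of_norm_le_const (μ := p) (f := f) (C := 1)
    (Filter.Eventually.of_forall hf)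
  simpa using this

lemma aux_meas_right (K : α → α → ℝ) (hK : Measurable (Function.uncurry K)) (x : α) :
    Measurable (fun y => K x y) := hK.comp measurable_prodMk_left

lemma aux_delta (K : α → α → ℝ) (hK : Measurable (Function.uncurry K))
    (hKsym : ∀ x y, K x y = K y x) (hb : ∀ x y, |K x y| ≤ 1)
    (p q : Measure α) [IsProbabilityMeasure p] [IsProbabilityMeasure q] :
    deltaK K p q = (∫ x, auxH K p q x ∂p) - ∫ x, auxH K p q x ∂q := by
  have hi : ∀ (r s : Measure α) [IsProbabilityMeasure r] [IsProbabilityMeasure s],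
      Integrable (fun x => ∫ y, K x y ∂r) s := fun r s _ _ =>
    aux_int_bdd _ (aux_meas_int K hK r) 1 (fun x => aux_bdd_int _ _ (hb x))
  unfold auxH deltaK
  rw [integral_sub (hi _ _) (hi _ _), integral_sub (hi _ _) (hi _ _)]
  have sw : ∫ x, ∫ y, K x y ∂p ∂q = ∫ x, ∫ y, K x y ∂q ∂p := by
    rw [integral_integral_swap (aux_int_bdd _ hK 1 (fun z => hb z.1 z.2))]
    simp_rw [hKsym]
  rw [sw]
  ring

lemma aux_lower (K : α → α → ℝ) (hK : Measurable (Function.uncurry K))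
    (hKsym : ∀ x y, K x y = K y x)
    (hKpsd : ∀ (m : ℕ) (z : Fin m → α) (a : Fin m → ℝ),
      0 ≤ ∑ i, ∑ j, a i * a j * K (z i) (z j)) (hb : ∀ x y, |K x y| ≤ 1)
    (p q : Measure α) [IsProbabilityMeasure p] [IsProbabilityMeasure q]
    (nX nY : ℕ) (ω : (Fin nX → α) × (Fin nY → α))
    (hX : (nX:ℝ) ≠ 0) (hY : (nY:ℝ) ≠ 0) :
    2 * ((1/(nX:ℝ)) * ∑ i, auxH K p q (ω.1 i) - (1/(nY:ℝ)) * ∑ j, auxH K p q (ω.2 j))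
      - deltaK K p q ≤ mmdStat K nX nY ω := by
  have hKr : ∀ x (r : Measure α) [IsProbabilityMeasure r], Integrable (fun y => K x y) r :=
    fun x r _ => aux_int_bdd _ (aux_meas_right K hK x) 1 (hb x)
  have hFm : Measurable (auxF K nX nY ω) := by
    unfold auxF
    exact ((Finset.measurable_fun_sum _ (fun i _ => aux_meas_right K hK _)).const_mul _).sub
      ((Finset.measurable_fun_sum _ (fun i _ => aux_meas_right K hK _)).const_mul _)
  have hsum : ∀ (n : ℕ) (w : Fin n → α) (x : α), (n:ℝ) ≠ 0 → |(1/(n:ℝ)) * ∑ i, K (w i) x| ≤ 1 := by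
    intro n w x hn
    have hn' : (0:ℝ) < n := lt_of_le_of_ne (Nat.cast_nonneg n) (Ne.symm hn)
    rw [abs_mul, abs_of_pos (by positivity)]
    have : |∑ i, K (w i) x| ≤ n := by
      refine (Finset.abs_sum_le_sum_abs _ _).trans ?_
      refine (Finset.sum_le_sum (fun i _ => hb (w i) x)).trans ?_
      simp
    rw [one_div, inv_mul_le_iff₀ hn']
    linarith
  have hFb : ∀ x, |auxF K nX nY ω x| ≤ 2 := by
    intro x
    unfold auxF
    have h1 := hsum nX ω.1 x hX
    have h2 := hsum nY ω.2 x hY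
    rw [abs_le] at *
    constructor <;> linarith [h1.1, h1.2, h2.1, h2.2]
  have hFi : ∀ (r : Measure α) [IsProbabilityMeasure r], Integrable (auxF K nX nY ω) r :=
    fun r _ => aux_int_bdd _ hFm 2 hFb
  have hHi : ∀ (r : Measure α) [IsProbabilityMeasure r], Integrable (auxH K p q) r := by
    intro r _
    exact (aux_int_bdd _ (aux_meas_int K hK p) 1 (fun x => aux_bdd_int _ _ (hb x))).sub
      (aux_int_bdd _ (aux_meas_int K hK q) 1 (fun x => aux_bdd_int _ _ (hb x)))
  set T := mmdStat K nX nY ω with hT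
  set F := auxF K nX nY ω with hF
  have main := aux_psd_integral (p.prod q) (fun z z' : α × α =>
      (T - F z.1 + F z.2) + (- F z'.1 + K z.1 z'.1 - K z.2 z'.1)
      - (- F z'.2 + K z.1 z'.2 - K z.2 z'.2))
    (by
      have k : ∀ (f g : (α × α) × (α × α) → α), Measurable f → Measurable g →
          Measurable (fun w => K (f w) (g w)) := fun f g hf hg => hK.comp (hf.prodMk hg)
      have m1 : Measurable (fun w : (α × α) × (α × α) => w.1.1) := measurable_fst.fst
      have m2 : Measurable (fun w : (α × α) × (α × α) => w.1.2) := measurable_fst.snd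
      have m3 : Measurable (fun w : (α × α) × (α × α) => w.2.1) := measurable_snd.fst
      have m4 : Measurable (fun w : (α × α) × (α × α) => w.2.2) := measurable_snd.snd
      have := k _ _ m1 m3
      have := k _ _ m2 m3
      have := k _ _ m1 m4
      have := k _ _ m2 m4
      have := hFm.comp m1
      have := hFm.comp m2
      have := hFm.comp m3
      have := hFm.comp m4
      simp only [Function.comp_def] at *
      unfold Function.uncurry
      fun_prop)
    (|T| + 12)
    (by
      intro z z'
      have a1 := hFb z.1
      have a2 := hFb z.2
      have a3 := hFb z'.1
      have a4 := hFb z'.2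
      have b1 := hb z.1 z'.1
      have b2 := hb z.2 z'.1
      have b3 := hb z.1 z'.2
      have b4 := hb z.2 z'.2
      have t1 := le_abs_self T
      have t2 := neg_abs_le T
      simp only [abs_le] at a1 a2 a3 a4 b1 b2 b3 b4
      rw [abs_le]
      constructor <;> linarith [a1.1, a1.2, a2.1, a2.2, a3.1, a3.2, a4.1, a4.2, b1.1, b1.2,
        b2.1, b2.2, b3.1, b3.2, b4.1, b4.2])
    (fun m z => aux_psdG K hKsym hKpsd nX nY ω hX hY m z)
  have inner : ∀ z : α × α, ∫ z', ((T - F z.1 + F z.2) + (- F z'.1 + K z.1 z'.1 - K z.2 z'.1)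
      - (- F z'.2 + K z.1 z'.2 - K z.2 z'.2)) ∂(p.prod q)
      = (T - (∫ x, F x ∂p) + ∫ x, F x ∂q) + (- F z.1 + auxH K p q z.1)
        - (- F z.2 + auxH K p q z.2) := by
    intro z
    have A : ∀ (r : Measure α) [IsProbabilityMeasure r],
        Integrable (fun x => - F x + K z.1 x - K z.2 x) r := fun r _ =>
      ((hFi r).neg.add (hKr _ r)).sub (hKr _ r)
    have B : ∀ (r : Measure α) [IsProbabilityMeasure r],
        ∫ x, (- F x + K z.1 x - K z.2 x) ∂r = -(∫ x, F x ∂r) + (∫ x, K z.1 x ∂r)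
          - ∫ x, K z.2 x ∂r := by
      intro r _
      have h3 : Integrable (fun x => - F x + K z.1 x) r := (hFi r).neg.add (hKr _ r)
      have h4 : Integrable (fun x => - F x) r := (hFi r).neg
      rw [integral_sub h3 (hKr _ r), integral_add h4 (hKr _ r), integral_neg]
    rw [aux_prod_int p q (fun x => - F x + K z.1 x - K z.2 x) (fun x => - F x + K z.1 x - K z.2 x)
      (A p) (A q) (T - F z.1 + F z.2), B, B]
    unfold auxH
    ring
  simp_rw [inner] at main
  have A2 : ∀ (r : Measure α) [IsProbabilityMeasure r],
      Integrable (fun x => - F x + auxH K p q x) r := fun r _ => (hFi r).neg.add (hHi r)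
  have B2 : ∀ (r : Measure α) [IsProbabilityMeasure r],
      ∫ x, (- F x + auxH K p q x) ∂r = -(∫ x, F x ∂r) + ∫ x, auxH K p q x ∂r := by
    intro r _
    have h4 : Integrable (fun x => - F x) r := (hFi r).neg
    rw [integral_add h4 (hHi r), integral_neg]
  rw [aux_prod_int p q (fun x => - F x + auxH K p q x) (fun x => - F x + auxH K p q x)
    (A2 p) (A2 q), B2, B2] at main
  have hd := aux_delta K hK hKsym hb p q
  have hFint : ∀ (r : Measure α) [IsProbabilityMeasure r], ∫ x, F x ∂r
      = (1/(nX:ℝ)) * ∑ i, ∫ x, K (ω.1 i) x ∂r - (1/(nY:ℝ)) * ∑ j, ∫ x, K (ω.2 j) x ∂r := by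
    intro r _
    rw [hF]
    unfold auxF
    rw [integral_sub ((integrable_finsetSum _ (fun i _ => hKr _ r)).const_mul _)
      ((integrable_finsetSum _ (fun i _ => hKr _ r)).const_mul _), integral_const_mul,
      integral_const_mul, integral_finsetSum _ (fun i _ => hKr _ r),
      integral_finsetSum _ (fun i _ => hKr _ r)]
  rw [hFint p, hFint q] at main
  have e : (1/(nX:ℝ)) * ∑ i, auxH K p q (ω.1 i) - (1/(nY:ℝ)) * ∑ j, auxH K p q (ω.2 j)
      = ((1/(nX:ℝ)) * ∑ i, ∫ x, K (ω.1 i) x ∂p - (1/(nY:ℝ)) * ∑ j, ∫ x, K (ω.2 j) x ∂p)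
      - ((1/(nX:ℝ)) * ∑ i, ∫ x, K (ω.1 i) x ∂q - (1/(nY:ℝ)) * ∑ j, ∫ x, K (ω.2 j) x ∂q) := by
    unfold auxH
    simp only [Finset.sum_sub_distrib]
    ring
  rw [e]
  linarith

lemma aux_sq_int (f : α → ℝ) (p : Measure α) [IsProbabilityMeasure p] (hm : Measurable f)
    (hf : ∀ x, |f x| ≤ 1) : (∫ y, f y ∂p)^2 ≤ ∫ y, (f y)^2 ∂p := by
  have hmem : MemLp f 2 p := MemLp.of_bound hm.aestronglyMeasurable 1 (Filter.Eventually.of_forall hf)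
  have h1 := ProbabilityTheory.variance_nonneg f p
  rw [ProbabilityTheory.variance_eq_sub hmem] at h1
  simp only [Pi.pow_apply] at h1
  linarith

lemma aux_H_meas (K : α → α → ℝ) (hK : Measurable (Function.uncurry K))
    (p q : Measure α) [IsProbabilityMeasure p] [IsProbabilityMeasure q] :
    Measurable (auxH K p q) := (aux_meas_int K hK p).sub (aux_meas_int K hK q)

lemma aux_H_bdd (K : α → α → ℝ) (hb : ∀ x y, |K x y| ≤ 1)
    (p q : Measure α) [IsProbabilityMeasure p] [IsProbabilityMeasure q] (x : α) :
    |auxH K p q x| ≤ 2 := by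
  have h1 := aux_bdd_int _ p (hb x)
  have h2 := aux_bdd_int _ q (hb x)
  unfold auxH
  rw [abs_le] at *
  constructor <;> linarith [h1.1, h1.2, h2.1, h2.2]

lemma aux_H_sq (K : α → α → ℝ) (hK : Measurable (Function.uncurry K)) (hb : ∀ x y, |K x y| ≤ 1)
    (p q r : Measure α) [IsProbabilityMeasure p] [IsProbabilityMeasure q] [IsProbabilityMeasure r]
    (ν : ℝ) (h1 : ∫ x, ∫ y, (K x y)^2 ∂p ∂r ≤ ν) (h2 : ∫ x, ∫ y, (K x y)^2 ∂q ∂r ≤ ν) :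
    ∫ x, (auxH K p q x)^2 ∂r ≤ 4 * ν := by
  have hK2 : Measurable (Function.uncurry (fun x y => (K x y)^2)) := hK.pow_const 2
  have hb2 : ∀ x y, |(K x y)^2| ≤ 1 := by
    intro x y
    rw [abs_pow]
    exact pow_le_one₀ (abs_nonneg _) (hb x y)
  have hi : ∀ (s : Measure α) [IsProbabilityMeasure s],
      Integrable (fun x => 2 * ∫ y, (K x y)^2 ∂s) r := fun s _ =>
    (aux_int_bdd _ (aux_meas_int _ hK2 s) 1 (fun x => aux_bdd_int _ _ (hb2 x))).const_mul 2
  have hHi : Integrable (fun x => (auxH K p q x)^2) r := by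
    refine aux_int_bdd _ ((aux_H_meas K hK p q).pow_const 2) 4 (fun x => ?_)
    rw [abs_pow]
    nlinarith [aux_H_bdd K hb p q x, abs_nonneg (auxH K p q x)]
  have := integral_mono hHi ((hi p).add (hi q)) (fun x => by
    have a := aux_sq_int _ p (aux_meas_right K hK x) (hb x)
    have b := aux_sq_int _ q (aux_meas_right K hK x) (hb x)
    simp only [Pi.add_apply]
    unfold auxH
    nlinarith [sq_nonneg ((∫ y, K x y ∂p) + ∫ y, K x y ∂q)])
  refine this.trans ?_
  simp only [Pi.add_apply]
  rw [integral_add (hi p) (hi q), integral_const_mul, integral_const_mul]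
  linarith

lemma aux_mgf (h : α → ℝ) (hm : Measurable h) (hb : ∀ x, |h x| ≤ 2) (p : Measure α)
    [IsProbabilityMeasure p] (V : ℝ) (hV : ∫ x, (h x)^2 ∂p ≤ V) (u : ℝ) (hu : |u| ≤ 1/2) :
    ∫ x, exp (u * h x) ∂p ≤ exp (u * (∫ x, h x ∂p) + u^2 * V) := by
  have hub : ∀ x, |u * h x| ≤ 1 := by
    intro x
    rw [abs_mul]
    nlinarith [hb x, abs_nonneg (h x), abs_nonneg u]
  have hi : Integrable h p := aux_int_bdd _ hm 2 hb
  have hi2 : Integrable (fun x => (h x)^2) p := by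
    refine aux_int_bdd _ (hm.pow_const 2) 4 (fun x => ?_)
    rw [abs_pow]
    nlinarith [hb x, abs_nonneg (h x)]
  have hie : Integrable (fun x => exp (u * h x)) p := by
    refine aux_int_bdd _ (by fun_prop) (exp 1) (fun x => ?_)
    rw [abs_of_pos (exp_pos _)]
    exact exp_le_exp.2 (abs_le.1 (hub x)).2
  have i1 : Integrable (fun x => 1 + u * h x) p := (integrable_const 1).add (hi.const_mul u)
  have i2 : Integrable (fun x => u^2 * (h x)^2) p := hi2.const_mul _
  have i3 : Integrable (fun x => (1 + u * h x) + u^2 * (h x)^2) p := i1.add i2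
  have := integral_mono hie i3 (fun x => by
    have := (abs_le.1 (Real.abs_exp_sub_one_sub_id_le (hub x))).2
    simp only
    rw [← mul_pow]
    linarith)
  rw [integral_add i1 i2, integral_add (integrable_const 1) (hi.const_mul u), integral_const_mul,
    integral_const_mul] at this
  simp only [integral_const, probReal_univ, smul_eq_mul, mul_one] at this
  refine this.trans ?_
  have h3 := add_one_le_exp (u * (∫ x, h x ∂p) + u^2 * V)
  nlinarith [mul_le_mul_of_nonneg_left hV (sq_nonneg u)]

lemma aux_mgf_n (h : α → ℝ) (hm : Measurable h) (hb : ∀ x, |h x| ≤ 2) (p : Measure α)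
    [IsProbabilityMeasure p] (V : ℝ) (hV : ∫ x, (h x)^2 ∂p ≤ V) (u : ℝ) (hu : |u| ≤ 1/2) (n : ℕ) :
    ∫ w, exp (u * ∑ i, h (w i)) ∂(Measure.pi fun _ : Fin n => p)
      ≤ exp (n * (u * (∫ x, h x ∂p) + u^2 * V)) := by
  simp_rw [Finset.mul_sum, exp_sum]
  rw [integral_fintype_prod_eq_prod (fun (_ : Fin n) x => exp (u * h x))]
  rw [Finset.prod_const, Finset.card_univ, Fintype.card_fin, exp_nat_mul]
  exact pow_le_pow_left₀ (integral_nonneg (fun x => (exp_pos _).le)) (aux_mgf h hm hb p V hV u hu) n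

end aux

/-- Proposition B.1 part 2: under `H₁ : p ≠ q` with `δ_K > 0`, for `0 < λ < 3√(cνn)`,
with probability at least `1 − 3e^{−λ²/8}`, `T̂ ≥ δ_K − 4λ√(ν/(cn))`. -/
theorem mmd_concentration_H1
    {d : ℕ} (𝒳 : Set (EuclideanSpace ℝ (Fin d))) (h𝒳 : MeasurableSet 𝒳)
    (K : 𝒳 → 𝒳 → ℝ)
    (hKmeas : Measurable (Function.uncurry K))
    (hKsym : ∀ x y, K x y = K y x)
    (hKpsd : ∀ (m : ℕ) (z : Fin m → 𝒳) (a : Fin m → ℝ),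
      0 ≤ ∑ i, ∑ j, a i * a j * K (z i) (z j))
    (hKbdd : ∀ x y, |K x y| ≤ 1)
    (p q : Measure 𝒳) [IsProbabilityMeasure p] [IsProbabilityMeasure q]
    (ν : ℝ) (hν1 : ν ≤ 1)
    (hνpp : ∫ x, ∫ y, (K x y)^2 ∂p ∂p ≤ ν)
    (hνpq : ∫ x, ∫ y, (K x y)^2 ∂q ∂p ≤ ν)
    (hνqq : ∫ x, ∫ y, (K x y)^2 ∂q ∂q ≤ ν)
    (nX nY : ℕ) (c : ℝ) (hc : 0 < c) (hc1 : c < 1)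
    (hbalX : c * ((nX + nY : ℕ) : ℝ) + 1 ≤ (nX : ℝ))
    (hbalY : c * ((nX + nY : ℕ) : ℝ) + 1 ≤ (nY : ℝ))
    (hH1 : p ≠ q) (hδ : 0 < deltaK K p q)
    (lam : ℝ) (hlam : 0 < lam)
    (hlam' : lam < 3 * Real.sqrt (c * ν * ((nX + nY : ℕ) : ℝ))) :
    1 - ENNReal.ofReal (3 * Real.exp (-lam^2 / 8)) ≤
      ((Measure.pi fun _ : Fin nX => p).prod (Measure.pi fun _ : Fin nY => q))
        {ω : (Fin nX → 𝒳) × (Fin nY → 𝒳) |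
          deltaK K p q - 4 * lam * Real.sqrt (ν/(c * ((nX + nY : ℕ) : ℝ)))
            ≤ mmdStat K nX nY ω} := by
  set N : ℝ := c * ((nX + nY : ℕ) : ℝ) with hN
  have hN0 : 0 ≤ N := by positivity
  have hXpos : (0:ℝ) < nX := by linarith
  have hYpos : (0:ℝ) < nY := by linarith
  have hNpos : 0 < N := by
    rw [hN]; push_cast; positivity
  have hNe : c * ν * ((nX + nY : ℕ) : ℝ) = ν * N := by rw [hN]; ring
  rw [hNe] at hlam'
  have hνN : 0 < ν * N := by
    by_contra hcon
    rw [Real.sqrt_eq_zero_of_nonpos (not_lt.1 hcon)] at hlam'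
    linarith
  have hν : 0 < ν := pos_of_mul_pos_left hνN hN0
  set s := Real.sqrt (ν / N) with hs
  have hspos : 0 < s := Real.sqrt_pos.2 (by positivity)
  have hs2 : s^2 = ν / N := Real.sq_sqrt (by positivity)
  have hsN : Real.sqrt (ν * N) = s * N := by
    rw [Real.sqrt_eq_iff_mul_self_eq (by positivity) (by positivity)]
    have : s * N * (s * N) = s^2 * N^2 := by ring
    rw [this, hs2]
    field_simp
  rw [hsN] at hlam'
  set θ := lam / (8 * s) with hθ
  have hθpos : 0 < θ := by positivity
  have hθN : θ / N ≤ 1/2 := by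
    rw [hθ, div_div, div_le_iff₀ (by positivity)]
    nlinarith [mul_pos hspos hNpos]
  set h := auxH K p q with hh
  have hm : Measurable h := aux_H_meas K hKmeas p q
  have hb : ∀ x, |h x| ≤ 2 := aux_H_bdd K hKbdd p q
  have hνqp : ∫ x, ∫ y, (K x y)^2 ∂p ∂q ≤ ν := by
    have hK2 : Measurable (Function.uncurry (fun x y => (K x y)^2)) := hKmeas.pow_const 2
    rw [integral_integral_swap (aux_int_bdd _ hK2 1 (fun z => by
      simp only [Function.uncurry, abs_pow]
      exact pow_le_one₀ (abs_nonneg _) (hKbdd _ _)))]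
    refine le_of_eq_of_le ?_ hνpq
    congr 1; ext x; congr 1; ext y
    rw [hKsym]
  have hVp : ∫ x, (h x)^2 ∂p ≤ 4 * ν := aux_H_sq K hKmeas hKbdd p q p ν hνpp hνpq
  have hVq : ∫ x, (h x)^2 ∂q ≤ 4 * ν := aux_H_sq K hKmeas hKbdd p q q ν hνqp hνqq
  have huX : |(-(θ / nX))| ≤ 1/2 := by
    rw [abs_neg, abs_of_pos (by positivity)]
    refine le_trans ?_ hθN
    gcongr
    linarith
  have huY : |θ / nY| ≤ 1/2 := by
    rw [abs_of_pos (by positivity)]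
    refine le_trans ?_ hθN
    gcongr
    linarith
  have mX := aux_mgf_n h hm hb p _ hVp _ huX nX
  have mY := aux_mgf_n h hm hb q _ hVq _ huY nY
  set P := (Measure.pi fun _ : Fin nX => p).prod (Measure.pi fun _ : Fin nY => q) with hP
  set X : (Fin nX → 𝒳) × (Fin nY → 𝒳) → ℝ := fun ω =>
    -((1/(nX:ℝ)) * ∑ i, h (ω.1 i) - (1/(nY:ℝ)) * ∑ j, h (ω.2 j)) with hXdef
  have hexp : ∀ ω, exp (θ * X ω) = exp (-(θ / nX) * ∑ i, h (ω.1 i)) *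
      exp ((θ / nY) * ∑ i, h (ω.2 i)) := by
    intro ω
    rw [← exp_add, hXdef]
    congr 1
    ring
  have hsb : ∀ (n : ℕ) (w : Fin n → 𝒳), |∑ i, h (w i)| ≤ n * 2 := by
    intro n w
    refine (Finset.abs_sum_le_sum_abs _ _).trans ?_
    refine (Finset.sum_le_sum (fun i _ => hb (w i))).trans ?_
    simp
  have hsm : ∀ (n : ℕ), Measurable (fun w : Fin n → 𝒳 => ∑ i, h (w i)) := fun n =>
    Finset.measurable_fun_sum _ (fun i _ => hm.comp (measurable_pi_apply i))
  have hebd : ∀ (n : ℕ) (u : ℝ) (r : Measure 𝒳) [IsProbabilityMeasure r],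
      Integrable (fun w : Fin n → 𝒳 => exp (u * ∑ i, h (w i))) (Measure.pi fun _ : Fin n => r) := by
    intro n u r _
    refine aux_int_bdd _ ((hsm n).const_mul u).exp (exp (|u| * (n * 2))) (fun w => ?_)
    rw [abs_of_pos (exp_pos _), exp_le_exp]
    refine (le_abs_self _).trans ?_
    rw [abs_mul]
    gcongr
    exact hsb n w
  have hint : Integrable (fun ω => exp (θ * X ω)) P := by
    simp_rw [hexp]
    exact (hebd nX _ p).mul_prod (hebd nY _ q)
  have chern := ProbabilityTheory.measure_ge_le_exp_mul_mgf (μ := P) (X := X) (t := θ)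
    (-deltaK K p q + 2 * lam * s) hθpos.le hint
  have hmgf : ProbabilityTheory.mgf X P θ ≤ exp (-θ * deltaK K p q + 8 * ν * θ^2 / N) := by
    unfold ProbabilityTheory.mgf
    simp_rw [hexp]
    rw [integral_prod_mul (fun w : Fin nX → 𝒳 => exp (-(θ / nX) * ∑ i, h (w i)))
      (fun w : Fin nY → 𝒳 => exp ((θ / nY) * ∑ i, h (w i)))]
    refine (mul_le_mul mX mY (integral_nonneg (fun x => (exp_pos _).le)) (exp_pos _).le).trans ?_
    rw [← exp_add, exp_le_exp, aux_delta K hKmeas hKsym hKbdd p q]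
    have e1 : (nX:ℝ) * (-(θ / nX) * (∫ x, h x ∂p) + (-(θ / nX))^2 * (4 * ν))
        = -θ * (∫ x, h x ∂p) + 4 * ν * θ^2 / nX := by field_simp
    have e2 : (nY:ℝ) * ((θ / nY) * (∫ x, h x ∂q) + (θ / nY)^2 * (4 * ν))
        = θ * (∫ x, h x ∂q) + 4 * ν * θ^2 / nY := by field_simp
    have b1 : 4 * ν * θ^2 / nX ≤ 4 * ν * θ^2 / N := by gcongr; linarith
    have b2 : 4 * ν * θ^2 / nY ≤ 4 * ν * θ^2 / N := by gcongr; linarith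
    have b3 : 8 * ν * θ^2 / N = 4 * ν * θ^2 / N + 4 * ν * θ^2 / N := by ring
    rw [e1, e2, b3]
    linarith
  have hfin : P.real {ω | -deltaK K p q + 2 * lam * s ≤ X ω} ≤ 3 * exp (-lam^2 / 8) := by
    refine chern.trans ((mul_le_mul_of_nonneg_left hmgf (exp_pos _).le).trans ?_)
    rw [← exp_add]
    have : -θ * (-deltaK K p q + 2 * lam * s) + (-θ * deltaK K p q + 8 * ν * θ^2 / N)
        = -lam^2 / 8 := by
      have t1 : 8 * ν * θ^2 / N = 8 * s^2 * θ^2 := by rw [hs2]; ring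
      rw [t1, hθ]
      field_simp
      ring
    rw [this]
    linarith [exp_pos (-lam^2 / 8)]
  set S := {ω : (Fin nX → 𝒳) × (Fin nY → 𝒳) |
          deltaK K p q - 4 * lam * s ≤ mmdStat K nX nY ω} with hS
  have hsub : Sᶜ ⊆ {ω | -deltaK K p q + 2 * lam * s ≤ X ω} := by
    intro ω hω
    simp only [hS, Set.mem_compl_iff, Set.mem_setOf_eq, not_le] at hω
    have := aux_lower K hKmeas hKsym hKpsd hKbdd p q nX nY ω hXpos.ne' hYpos.ne'
    simp only [Set.mem_setOf_eq, hXdef]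
    linarith
  have hcompl : P Sᶜ ≤ ENNReal.ofReal (3 * exp (-lam^2 / 8)) := by
    refine (measure_mono hsub).trans ?_
    rw [← ofReal_measureReal]
    exact ENNReal.ofReal_le_ofReal hfin
  rw [tsub_le_iff_right]
  calc (1 : ℝ≥0∞) = P Set.univ := by simp [hP]
    _ = P (S ∪ Sᶜ) := by rw [Set.union_compl_self]
    _ ≤ P S + P Sᶜ := measure_union_le _ _
    _ ≤ _ := by gcongr
end

section
/- (Proposition B.3, part 1.) Assume p = q. Let 0 < δ < 1 satisfy √(log(1/δ)/(2 c_a n)) ≤ 0.1 ν. Then there exists a measurable set E of training configurations D_tr with P_(1)(E) ≥ 1 − 4δ such that for every D_tr ∈ E and every 0 < λ < 3 √(1.1 ν c_a n), the conditional probability P_(2)[ T̂_a > Ĉ + 4 λ √(1.1 ν/(c_a n)) ] ≤ 4 e^{−λ²/4}. -/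
open MeasureTheory Real
open scoped BigOperators ENNReal

/-- The exact NTK witness function `ĝ_NTK` built from the training sample
`dtr = (X₍₁₎, Y₍₁₎)`. -/
noncomputable def ntkWitness {𝒳 : Type*} (K : 𝒳 → 𝒳 → ℝ) (n1X n1Y : ℕ)
    (dtr : (Fin n1X → 𝒳) × (Fin n1Y → 𝒳)) (x : 𝒳) : ℝ :=
  (1/(n1X:ℝ)) * ∑ j, K x (dtr.1 j) - (1/(n1Y:ℝ)) * ∑ j, K x (dtr.2 j)

/-- The conditional mean `Ĉ = ∫ ĝ_NTK d(p−q) = ∫ ĝ_NTK dp − ∫ ĝ_NTK dq`. -/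
noncomputable def condMeanC {𝒳 : Type*} [MeasurableSpace 𝒳] (K : 𝒳 → 𝒳 → ℝ)
    (n1X n1Y : ℕ) (p q : Measure 𝒳)
    (dtr : (Fin n1X → 𝒳) × (Fin n1Y → 𝒳)) : ℝ :=
  (∫ x, ntkWitness K n1X n1Y dtr x ∂p) - ∫ x, ntkWitness K n1X n1Y dtr x ∂q

lemma aux_hoeffding {Ω : Type*} [MeasurableSpace Ω] (p : Measure Ω) [IsProbabilityMeasure p]
    (h : Ω → ℝ) (hm : Measurable h) (h0 : ∀ x, 0 ≤ h x) (h1 : ∀ x, h x ≤ 1) (ν ε : ℝ)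
    (hν : ∫ x, h x ∂p ≤ ν) (hε : 0 ≤ ε) (n : ℕ) (hn : 0 < n) :
    (Measure.pi fun _ : Fin n => p).real {x | (n:ℝ) * (ν + ε) ≤ ∑ j, h (x j)}
      ≤ Real.exp (-(2 * n * ε^2)) := by
  have hind : ProbabilityTheory.iIndepFun
      (fun (i : Fin n) (ω : Fin n → Ω) => h (ω i) - ∫ x, h x ∂p)
      (Measure.pi fun _ : Fin n => p) :=
    ProbabilityTheory.iIndepFun_pi (X := fun (_ : Fin n) (x : Ω) => h x - ∫ x, h x ∂p)
      (μ := fun _ : Fin n => p)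
      (fun i => (hm.sub_const _).aemeasurable)
  have hsub : ∀ i ∈ (Finset.univ : Finset (Fin n)), ProbabilityTheory.HasSubgaussianMGF
      (fun (ω : Fin n → Ω) => h (ω i) - ∫ x, h x ∂p) ((‖(1:ℝ) - 0‖₊ / 2) ^ 2)
      (Measure.pi fun _ : Fin n => p) := by
    intro i _
    have := ProbabilityTheory.hasSubgaussianMGF_of_mem_Icc
      (μ := Measure.pi fun _ : Fin n => p) (X := fun ω : Fin n → Ω => h (ω i)) (a := 0) (b := 1)
      (hm.comp (measurable_pi_apply i)).aemeasurable
      (Filter.Eventually.of_forall fun ω => ⟨h0 _, h1 _⟩)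
    have he : ∫ ω : Fin n → Ω, h (ω i) ∂(Measure.pi fun _ : Fin n => p) = ∫ x, h x ∂p :=
      integral_comp_eval (μ := fun _ : Fin n => p) (i := i) hm.aestronglyMeasurable
    rwa [he] at this
  have key := ProbabilityTheory.HasSubgaussianMGF.measure_sum_ge_le_of_iIndepFun hind hsub
    (ε := n * ε) (by positivity)
  refine (measureReal_mono ?_).trans (key.trans (le_of_eq ?_))
  · intro x hx
    simp only [Set.mem_ofPred_eq, Finset.sum_sub_distrib, Finset.sum_const, Finset.card_univ,
      Fintype.card_fin, nsmul_eq_mul] at hx ⊢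
    have : (n:ℝ) * ∫ x, h x ∂p ≤ n * ν := by gcongr
    linarith
  · congr 1
    have : (n:ℝ) ≠ 0 := by positivity
    simp
    field_simp

lemma aux_mgf_s13 {Ω : Type*} [MeasurableSpace Ω] (p : Measure Ω) [IsProbabilityMeasure p]
    (g : Ω → ℝ) (hm : Measurable g) (hb : ∀ x, |g x| ≤ 2) (W c : ℝ)
    (hW : ∫ x, (g x)^2 ∂p ≤ W) (hc : |c| * 2 ≤ 1) :
    ∫ x, Real.exp (c * g x) ∂p ≤ Real.exp (c * ∫ x, g x ∂p + c^2 * W) := by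
  have ig : Integrable g p := Integrable.of_bound hm.aestronglyMeasurable 2
    (Filter.Eventually.of_forall hb)
  have ig2 : Integrable (fun x => (g x)^2) p := Integrable.of_bound
    (hm.pow_const 2).aestronglyMeasurable 4
    (Filter.Eventually.of_forall fun x => by
      rw [Real.norm_eq_abs, abs_pow]; nlinarith [hb x, abs_nonneg (g x)])
  have hpt : ∀ x, Real.exp (c * g x) ≤ 1 + c * g x + c^2 * (g x)^2 := by
    intro x
    have h1 : |c * g x| ≤ 1 := by
      rw [abs_mul]
      exact (mul_le_mul_of_nonneg_left (hb x) (abs_nonneg c)).trans hc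
    have := (abs_le.1 (Real.abs_exp_sub_one_sub_id_le h1)).2
    nlinarith
  have i1 : Integrable (fun x => 1 + c * g x) p := (integrable_const 1).add (ig.const_mul c)
  have i2 : Integrable (fun x => c^2 * (g x)^2) p := ig2.const_mul _
  calc ∫ x, Real.exp (c * g x) ∂p ≤ ∫ x, (1 + c * g x + c^2 * (g x)^2) ∂p :=
        integral_mono_of_nonneg (Filter.Eventually.of_forall fun x => (Real.exp_pos _).le)
          (i1.add i2) (Filter.Eventually.of_forall hpt)
    _ = 1 + c * ∫ x, g x ∂p + c^2 * ∫ x, (g x)^2 ∂p := by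
        rw [integral_add i1 i2, integral_add (integrable_const 1) (ig.const_mul c),
          integral_const_mul, integral_const_mul]
        simp
    _ ≤ 1 + c * ∫ x, g x ∂p + c^2 * W := by gcongr
    _ ≤ _ := by
        have := Real.add_one_le_exp (c * ∫ x, g x ∂p + c^2 * W)
        linarith

lemma aux_test {Ω : Type*} [MeasurableSpace Ω] (p : Measure Ω) [IsProbabilityMeasure p]
    (g : Ω → ℝ) (hm : Measurable g) (hb : ∀ x, |g x| ≤ 2) (W s τ : ℝ)
    (hW : ∫ x, (g x)^2 ∂p ≤ W) (n m : ℕ) (hn : 0 < n) (hm0 : 0 < m) (hs : 0 ≤ s)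
    (hsn : s * 2 ≤ n) (hsm : s * 2 ≤ m) :
    ((Measure.pi fun _ : Fin n => p).prod (Measure.pi fun _ : Fin m => p)).real
      {z | τ ≤ (1/(n:ℝ)) * ∑ i, g (z.1 i) - (1/(m:ℝ)) * ∑ i, g (z.2 i)}
      ≤ Real.exp (-s * τ) * Real.exp (s^2 * W / n + s^2 * W / m) := by
  have hn' : (0:ℝ) < n := by exact_mod_cast hn
  have hm' : (0:ℝ) < m := by exact_mod_cast hm0
  set P := (Measure.pi fun _ : Fin n => p).prod (Measure.pi fun _ : Fin m => p)
  set X : (Fin n → Ω) × (Fin m → Ω) → ℝ :=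
    fun z => (1/(n:ℝ)) * ∑ i, g (z.1 i) - (1/(m:ℝ)) * ∑ i, g (z.2 i) with hX
  have hXm : Measurable X := by
    rw [hX]; fun_prop
  have hsum : ∀ (k : ℕ) (hk : (0:ℝ) < k) (x : Fin k → Ω), |(1/(k:ℝ)) * ∑ i, g (x i)| ≤ 2 := by
    intro k hk x
    rw [abs_mul, abs_of_pos (by positivity : (0:ℝ) < 1/k)]
    have : |∑ i, g (x i)| ≤ k * 2 := by
      refine (Finset.abs_sum_le_sum_abs _ _).trans ?_
      refine (Finset.sum_le_sum fun i _ => hb (x i)).trans ?_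
      simp
    rw [one_div, inv_mul_le_iff₀ hk]; exact this
  have hXb : ∀ z, |X z| ≤ 4 := fun z => by
    have h1 := hsum n hn' z.1
    have h2 := hsum m hm' z.2
    rw [abs_le] at h1 h2 ⊢
    constructor <;> simp only [hX] <;> linarith [h1.1, h1.2, h2.1, h2.2]
  have hint : Integrable (fun z => Real.exp (s * X z)) P := by
    refine Integrable.of_bound (by fun_prop) (Real.exp (s * 4))
      (Filter.Eventually.of_forall fun z => ?_)
    rw [Real.norm_eq_abs, abs_of_pos (Real.exp_pos _)]
    gcongr
    exact (abs_le.1 (hXb z)).2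
  refine (ProbabilityTheory.measure_ge_le_exp_mul_mgf τ hs hint).trans ?_
  gcongr
  have hfac : ∀ z, Real.exp (s * X z) = (∏ i, Real.exp (s / n * g (z.1 i))) *
      ∏ i, Real.exp (-(s / m) * g (z.2 i)) := by
    intro z
    rw [← Real.exp_sum, ← Real.exp_sum, ← Real.exp_add, ← Finset.mul_sum, ← Finset.mul_sum]
    congr 1
    simp only [hX]; ring
  unfold ProbabilityTheory.mgf
  simp_rw [hfac]
  rw [integral_prod_mul (fun x : Fin n → Ω => ∏ i, Real.exp (s / n * g (x i)))
    (fun y : Fin m → Ω => ∏ i, Real.exp (-(s / m) * g (y i))),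
    integral_fintype_prod_eq_pow (fun x => Real.exp (s / n * g x)),
    integral_fintype_prod_eq_pow (fun x => Real.exp (-(s / m) * g x)), Fintype.card_fin,
    Fintype.card_fin]
  have b1 := aux_mgf_s13 p g hm hb W (s / n) hW (by
    rw [abs_of_nonneg (by positivity), div_mul_eq_mul_div, div_le_one hn']; exact hsn)
  have b2 := aux_mgf_s13 p g hm hb W (-(s / m)) hW (by
    rw [abs_neg, abs_of_nonneg (by positivity), div_mul_eq_mul_div, div_le_one hm']; exact hsm)
  have c1 := pow_le_pow_left₀ (integral_nonneg fun x => (Real.exp_pos _).le) b1 n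
  have c2 := pow_le_pow_left₀ (integral_nonneg fun x => (Real.exp_pos _).le) b2 m
  refine (mul_le_mul c1 c2 (pow_nonneg (integral_nonneg fun x => (Real.exp_pos _).le) _)
    (by positivity)).trans (le_of_eq ?_)
  rw [← Real.exp_nat_mul, ← Real.exp_nat_mul, ← Real.exp_add]
  congr 1
  field_simp
  ring

lemma aux_second {Ω : Type*} [MeasurableSpace Ω] (p : Measure Ω) [IsProbabilityMeasure p]
    (K : Ω → Ω → ℝ) (hKmeas : Measurable (Function.uncurry K))
    (hKsym : ∀ x y, K x y = K y x)
    (hKbdd : ∀ x y, |K x y| ≤ 1) (n m : ℕ) (hn : 0 < n) (hm0 : 0 < m) (V : ℝ)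
    (dtr : (Fin n → Ω) × (Fin m → Ω))
    (h1 : ∑ j, ∫ y, (K (dtr.1 j) y)^2 ∂p ≤ n * V)
    (h2 : ∑ j, ∫ y, (K (dtr.2 j) y)^2 ∂p ≤ m * V) :
    ∫ x, (ntkWitness K n m dtr x)^2 ∂p ≤ 4 * V := by
  have hn' : (0:ℝ) < n := by exact_mod_cast hn
  have hm' : (0:ℝ) < m := by exact_mod_cast hm0
  have hi : ∀ z, Integrable (fun y => (K z y)^2) p := fun z => by
    refine Integrable.of_bound
      ((hKmeas.comp (measurable_const.prodMk measurable_id)).pow_const 2).aestronglyMeasurable 1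
      (Filter.Eventually.of_forall fun y => ?_)
    rw [Real.norm_eq_abs, abs_pow]
    exact pow_le_one₀ (abs_nonneg _) (hKbdd z y)
  have hsq : ∀ (k : ℕ) (hk : (0:ℝ) < k) (f : Fin k → ℝ),
      ((1/(k:ℝ)) * ∑ j, f j)^2 ≤ (1/(k:ℝ)) * ∑ j, (f j)^2 := by
    intro k hk f
    have := sq_sum_le_card_mul_sum_sq (s := Finset.univ) (f := f)
    rw [Finset.card_univ, Fintype.card_fin] at this
    rw [mul_pow]
    calc (1/(k:ℝ))^2 * (∑ j, f j)^2 ≤ (1/(k:ℝ))^2 * (k * ∑ j, (f j)^2) := by gcongr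
      _ = _ := by field_simp
  have hpt : ∀ x, (ntkWitness K n m dtr x)^2 ≤
      (2/(n:ℝ)) * ∑ j, (K (dtr.1 j) x)^2 + (2/(m:ℝ)) * ∑ j, (K (dtr.2 j) x)^2 := by
    intro x
    have e1 := hsq n hn' (fun j => K (dtr.1 j) x)
    have e2 := hsq m hm' (fun j => K (dtr.2 j) x)
    unfold ntkWitness
    simp_rw [hKsym x]
    have : (2/(n:ℝ)) = 2 * (1/n) := by ring
    have : (2/(m:ℝ)) = 2 * (1/m) := by ring
    set a := (1/(n:ℝ)) * ∑ j, K (dtr.1 j) x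
    set b := (1/(m:ℝ)) * ∑ j, K (dtr.2 j) x
    calc (a - b)^2 ≤ 2 * a^2 + 2 * b^2 := by nlinarith [sq_nonneg (a+b)]
      _ ≤ 2 * ((1/(n:ℝ)) * ∑ j, (K (dtr.1 j) x)^2) + 2 * ((1/(m:ℝ)) * ∑ j, (K (dtr.2 j) x)^2) := by
        gcongr
      _ = _ := by ring
  have s1 : Integrable (fun x => ∑ j, (K (dtr.1 j) x)^2) p :=
    integrable_finsetSum _ fun j _ => hi _
  have s2 : Integrable (fun x => ∑ j, (K (dtr.2 j) x)^2) p :=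
    integrable_finsetSum _ fun j _ => hi _
  calc ∫ x, (ntkWitness K n m dtr x)^2 ∂p
      ≤ ∫ x, ((2/(n:ℝ)) * ∑ j, (K (dtr.1 j) x)^2 + (2/(m:ℝ)) * ∑ j, (K (dtr.2 j) x)^2) ∂p :=
        integral_mono_of_nonneg (Filter.Eventually.of_forall fun x => sq_nonneg _)
          ((s1.const_mul _).add (s2.const_mul _)) (Filter.Eventually.of_forall hpt)
    _ = (2/(n:ℝ)) * ∑ j, ∫ x, (K (dtr.1 j) x)^2 ∂p
        + (2/(m:ℝ)) * ∑ j, ∫ x, (K (dtr.2 j) x)^2 ∂p := by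
        rw [integral_add (s1.const_mul _) (s2.const_mul _), integral_const_mul,
          integral_const_mul, integral_finsetSum _ fun j _ => hi _,
          integral_finsetSum _ fun j _ => hi _]
    _ ≤ (2/(n:ℝ)) * (n * V) + (2/(m:ℝ)) * (m * V) := by gcongr
    _ = 4 * V := by field_simp; ring

lemma aux_asym {Ω : Type*} (K : Ω → Ω → ℝ) (n1X n1Y n2X n2Y : ℕ)
    (dtr : (Fin n1X → Ω) × (Fin n1Y → Ω)) (dte : (Fin n2X → Ω) × (Fin n2Y → Ω)) :
    asymMMD K n1X n1Y n2X n2Y dtr dte =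
      (1/(n2X:ℝ)) * ∑ i, ntkWitness K n1X n1Y dtr (dte.1 i)
      - (1/(n2Y:ℝ)) * ∑ i, ntkWitness K n1X n1Y dtr (dte.2 i) := by
  unfold asymMMD ntkWitness
  simp only [Finset.sum_sub_distrib, ← Finset.mul_sum, one_div, mul_inv]
  ring

lemma aux_wit {Ω : Type*} [MeasurableSpace Ω]
    (K : Ω → Ω → ℝ) (hKmeas : Measurable (Function.uncurry K))
    (hKbdd : ∀ x y, |K x y| ≤ 1) (n m : ℕ) (hn : 0 < n) (hm0 : 0 < m)
    (dtr : (Fin n → Ω) × (Fin m → Ω)) :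
    Measurable (ntkWitness K n m dtr) ∧ ∀ x, |ntkWitness K n m dtr x| ≤ 2 := by
  have hn' : (0:ℝ) < n := by exact_mod_cast hn
  have hm' : (0:ℝ) < m := by exact_mod_cast hm0
  have hz : ∀ z, Measurable (fun x => K x z) := fun z =>
    hKmeas.comp (measurable_id.prodMk measurable_const)
  constructor
  · unfold ntkWitness
    exact ((Finset.measurable_fun_sum _ fun j _ => hz _).const_mul _).sub
      ((Finset.measurable_fun_sum _ fun j _ => hz _).const_mul _)
  · intro x
    have hsum : ∀ (k : ℕ) (hk : (0:ℝ) < k) (z : Fin k → Ω), |(1/(k:ℝ)) * ∑ i, K x (z i)| ≤ 1 := by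
      intro k hk z
      rw [abs_mul, abs_of_pos (by positivity : (0:ℝ) < 1/k)]
      have : |∑ i, K x (z i)| ≤ k * 1 := by
        refine (Finset.abs_sum_le_sum_abs _ _).trans ?_
        refine (Finset.sum_le_sum fun i _ => hKbdd x (z i)).trans ?_
        simp
      rw [one_div, inv_mul_le_iff₀ hk]; exact this
    have h1 := hsum n hn' dtr.1
    have h2 := hsum m hm' dtr.2
    rw [abs_le] at h1 h2 ⊢
    unfold ntkWitness
    constructor <;> linarith [h1.1, h1.2, h2.1, h2.2]

/-- Proposition B.3, part 1: under `H₀ : p = q`, for `0 < δ < 1` with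
`√(log(1/δ)/(2c_a n)) ≤ 0.1ν`, there is a good event `E` of training data with
`P₍₁₎(E) ≥ 1 − 4δ` under which, for all `0 < λ < 3√(1.1νc_a n)`,
`P₍₂₎[T̂_a > Ĉ + 4λ√(1.1ν/(c_a n))] ≤ 4e^{−λ²/4}`. -/
theorem asym_mmd_conditional_concentration_H0
    {d : ℕ} (𝒳 : Set (EuclideanSpace ℝ (Fin d))) (h𝒳 : MeasurableSet 𝒳)
    (K : 𝒳 → 𝒳 → ℝ)
    (hKmeas : Measurable (Function.uncurry K))
    (hKsym : ∀ x y, K x y = K y x)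
    (hKpsd : ∀ (m : ℕ) (z : Fin m → 𝒳) (a : Fin m → ℝ),
      0 ≤ ∑ i, ∑ j, a i * a j * K (z i) (z j))
    (hKbdd : ∀ x y, |K x y| ≤ 1)
    (p q : Measure 𝒳) [IsProbabilityMeasure p] [IsProbabilityMeasure q]
    (ν : ℝ) (hν1 : ν ≤ 1)
    (hνpp : ∫ x, ∫ y, (K x y)^2 ∂p ∂p ≤ ν)
    (hνpq : ∫ x, ∫ y, (K x y)^2 ∂q ∂p ≤ ν)
    (hνqq : ∫ x, ∫ y, (K x y)^2 ∂q ∂q ≤ ν)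
    (n1X n1Y n2X n2Y : ℕ) (ca : ℝ) (hca : 0 < ca) (hca1 : ca < 1)
    (hbal1 : ca * ((n1X + n1Y + n2X + n2Y : ℕ) : ℝ) ≤ (n1X : ℝ))
    (hbal2 : ca * ((n1X + n1Y + n2X + n2Y : ℕ) : ℝ) ≤ (n1Y : ℝ))
    (hbal3 : ca * ((n1X + n1Y + n2X + n2Y : ℕ) : ℝ) ≤ (n2X : ℝ))
    (hbal4 : ca * ((n1X + n1Y + n2X + n2Y : ℕ) : ℝ) ≤ (n2Y : ℝ))
    (hH0 : p = q)
    (δ : ℝ) (hδ0 : 0 < δ) (hδ1 : δ < 1)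
    (hδν : Real.sqrt (Real.log (1/δ) / (2 * ca * ((n1X + n1Y + n2X + n2Y : ℕ) : ℝ)))
      ≤ 0.1 * ν) :
    ∃ E : Set ((Fin n1X → 𝒳) × (Fin n1Y → 𝒳)), MeasurableSet E ∧
      1 - ENNReal.ofReal (4 * δ) ≤
        ((Measure.pi fun _ : Fin n1X => p).prod (Measure.pi fun _ : Fin n1Y => q)) E ∧
      ∀ dtr ∈ E, ∀ lam : ℝ, 0 < lam →
        lam < 3 * Real.sqrt (1.1 * ν * ca * ((n1X + n1Y + n2X + n2Y : ℕ) : ℝ)) →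
        ((Measure.pi fun _ : Fin n2X => p).prod (Measure.pi fun _ : Fin n2Y => q))
          {dte : (Fin n2X → 𝒳) × (Fin n2Y → 𝒳) |
            asymMMD K n1X n1Y n2X n2Y dtr dte >
              condMeanC K n1X n1Y p q dtr
              + 4 * lam * Real.sqrt (1.1 * ν / (ca * ((n1X + n1Y + n2X + n2Y : ℕ) : ℝ)))}
          ≤ ENNReal.ofReal (4 * Real.exp (-lam^2 / 4)) := by
  subst hH0
  generalize hnn : ((n1X + n1Y + n2X + n2Y : ℕ) : ℝ) = nn at *
  have hnn0 : 0 ≤ nn := by rw [← hnn]; positivity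
  rcases hnn0.eq_or_lt with h0 | hpos
  · refine ⟨Set.univ, MeasurableSet.univ, by simp, ?_⟩
    intro dtr _ lam hl hl2
    rw [← h0] at hl2
    simp at hl2
    linarith
  have hN : 0 < ca * nn := mul_pos hca hpos
  have hlog : 0 < Real.log (1/δ) := Real.log_pos (by rw [lt_div_iff₀ hδ0]; linarith)
  have hν0 : 0 < ν := by
    have : 0 < Real.sqrt (Real.log (1/δ) / (2 * ca * nn)) :=
      Real.sqrt_pos.2 (div_pos hlog (by nlinarith))
    linarith
  have hεlog : Real.log (1/δ) ≤ 2 * (ca * nn) * (0.1 * ν)^2 := by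
    rw [Real.sqrt_le_left (by positivity), div_le_iff₀ (by nlinarith)] at hδν
    linarith
  have p1 : 0 < n1X := by exact_mod_cast hN.trans_le hbal1
  have p2 : 0 < n1Y := by exact_mod_cast hN.trans_le hbal2
  have p3 : 0 < n2X := by exact_mod_cast hN.trans_le hbal3
  have p4 : 0 < n2Y := by exact_mod_cast hN.trans_le hbal4
  set h : 𝒳 → ℝ := fun z => ∫ y, (K z y)^2 ∂p with hh
  have hsq1 : ∀ x y, (K x y)^2 ≤ 1 := fun x y => by
    rw [← sq_abs]; exact pow_le_one₀ (abs_nonneg _) (hKbdd x y)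
  have hhm : Measurable h := by
    have : StronglyMeasurable (Function.uncurry fun z y => (K z y)^2) :=
      (hKmeas.pow_const 2).stronglyMeasurable
    exact this.integral_prod_right.measurable
  have hh0 : ∀ z, 0 ≤ h z := fun z => integral_nonneg fun y => sq_nonneg _
  have hh1 : ∀ z, h z ≤ 1 := fun z => by
    have := integral_mono_of_nonneg (μ := p) (f := fun y => (K z y)^2) (g := fun _ => (1:ℝ))
      (Filter.Eventually.of_forall fun y => sq_nonneg _) (integrable_const 1)
      (Filter.Eventually.of_forall fun y => hsq1 z y)
    simpa using this
  have hoef : ∀ k : ℕ, 0 < k → ca * nn ≤ k → (Measure.pi fun _ : Fin k => p)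
      {x | (k:ℝ) * (ν + 0.1 * ν) ≤ ∑ j, h (x j)} ≤ ENNReal.ofReal δ := by
    intro k hk hkN
    have := aux_hoeffding p h hhm hh0 hh1 ν (0.1 * ν) hνpp (by positivity) k hk
    rw [← ofReal_measureReal]
    refine ENNReal.ofReal_le_ofReal (this.trans ?_)
    rw [← Real.le_log_iff_exp_le hδ0]
    have e : Real.log (1/δ) = - Real.log δ := by rw [one_div, Real.log_inv]
    have : 2 * (ca * nn) * (0.1 * ν)^2 ≤ 2 * k * (0.1 * ν)^2 := by gcongr
    linarith
  set B1 : Set (Fin n1X → 𝒳) := {x | (n1X:ℝ) * (ν + 0.1 * ν) ≤ ∑ j, h (x j)} with hB1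
  set B2 : Set (Fin n1Y → 𝒳) := {x | (n1Y:ℝ) * (ν + 0.1 * ν) ≤ ∑ j, h (x j)} with hB2
  have mB1 : MeasurableSet B1 := measurableSet_le measurable_const (by fun_prop)
  have mB2 : MeasurableSet B2 := measurableSet_le measurable_const (by fun_prop)
  have b1 := hoef n1X p1 hbal1
  have b2 := hoef n1Y p2 hbal2
  set P1 := (Measure.pi fun _ : Fin n1X => p).prod (Measure.pi fun _ : Fin n1Y => p) with hP1
  have mbad : MeasurableSet (B1 ×ˢ (Set.univ : Set (Fin n1Y → 𝒳)) ∪ (Set.univ : Set (Fin n1X → 𝒳)) ×ˢ B2) :=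
    (mB1.prod MeasurableSet.univ).union (MeasurableSet.univ.prod mB2)
  refine ⟨(B1 ×ˢ Set.univ ∪ Set.univ ×ˢ B2)ᶜ, mbad.compl, ?_, ?_⟩
  · rw [prob_compl_eq_one_sub mbad]
    refine tsub_le_tsub_left ?_ _
    refine (measure_union_le _ _).trans ?_
    rw [hP1, Measure.prod_prod, Measure.prod_prod]
    simp only [measure_univ, mul_one, one_mul]
    refine (add_le_add b1 b2).trans ?_
    rw [← ENNReal.ofReal_add hδ0.le hδ0.le]
    exact ENNReal.ofReal_le_ofReal (by linarith)
  · intro dtr hdtr lam hl hl2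
    simp only [Set.mem_compl_iff, Set.mem_union, Set.mem_prod, Set.mem_univ, and_true, true_and,
      not_or, hB1, hB2, Set.mem_ofPred_eq, not_le] at hdtr
    set V := 1.1 * ν with hV
    have hV0 : 0 < V := by positivity
    have hVe : ν + 0.1 * ν = V := by rw [hV]; ring
    rw [hVe] at hdtr
    have hW := aux_second p K hKmeas hKsym hKbdd n1X n1Y p1 p2 V dtr hdtr.1.le hdtr.2.le
    obtain ⟨gm, gb⟩ := aux_wit K hKmeas hKbdd n1X n1Y p1 p2 dtr
    set N := ca * nn with hNdef
    have hVN : 1.1 * ν * ca * nn = V * N := by rw [hV, hNdef]; ring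
    rw [show V * ca * nn = V * N by rw [hNdef]; ring] at hl2
    set r := Real.sqrt (V * N) with hr
    have hr0 : 0 < r := Real.sqrt_pos.2 (mul_pos hV0 hN)
    have hr2 : r^2 = V * N := Real.sq_sqrt (mul_pos hV0 hN).le
    have hsq : Real.sqrt (V / N) = r / N := by
      rw [show V / N = (V * N) / N^2 by field_simp, Real.sqrt_div (mul_pos hV0 hN).le,
        Real.sqrt_sq hN.le]
    rw [hsq]
    have hC : condMeanC K n1X n1Y p p dtr = 0 := by simp [condMeanC]
    rw [hC, zero_add]
    set s := lam / (8 * r) * N with hs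
    have hs0 : 0 ≤ s := by positivity
    have hs2 : s * 2 ≤ N := by
      have : lam / (8 * r) ≤ 1/2 := by
        rw [div_le_iff₀ (by positivity)]; linarith
      rw [hs]; nlinarith
    have key := aux_test p _ gm gb (4 * V) s (4 * lam * (r / N)) hW n2X n2Y p3 p4 hs0
      (hs2.trans hbal3) (hs2.trans hbal4)
    rw [← ofReal_measureReal]
    refine ENNReal.ofReal_le_ofReal ?_
    refine (measureReal_mono ?_).trans (key.trans ?_)
    · intro dte hd
      simp only [Set.mem_ofPred_eq] at hd ⊢
      rw [aux_asym] at hd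
      exact hd.le
    · have d1 : s^2 * (4 * V) / n2X ≤ s^2 * (4 * V) / N := by gcongr
      have d2 : s^2 * (4 * V) / n2Y ≤ s^2 * (4 * V) / N := by gcongr
      have d3 : s^2 * (4 * V) / N = lam^2 / 16 := by
        have e : s^2 * (4 * V) / N = lam^2 / 16 * (V * N) / r^2 := by
          rw [hs]
          field_simp
          ring
        rw [e, hr2, mul_div_assoc, div_self (mul_pos hV0 hN).ne', mul_one]
      have d4 : s * (4 * lam * (r / N)) = lam^2 / 2 := by
        rw [hs]; field_simp; ring
      rw [← Real.exp_add]
      have d5 : -s * (4 * lam * (r / N)) + (s^2 * (4 * V) / n2X + s^2 * (4 * V) / n2Y)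
          ≤ -lam^2 / 4 := by
        rw [neg_mul, d4]; linarith [sq_nonneg lam]
      have := Real.exp_le_exp.2 d5
      linarith [Real.exp_pos (-lam^2/4)]
end

section
/- (Proposition B.4, part 1: concentration of T̂_a under H0.) Assume p = q. Then for any 0 < λ < 3 √(c_a ν n), with probability at least 1 − 4 e^{−λ²/8} under the joint product law of the four samples, T̂_a ≤ 4 λ √(ν/(c_a n)). -/
open MeasureTheory Real
open scoped BigOperators ENNReal

lemma aux_exp_bound (x : ℝ) (hx : |x| ≤ 3/2) : Real.exp x ≤ 1 + x + 2 * x^2 := by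
  have h1 := abs_le.1 hx
  have h2 : |x/2| ≤ 1 := by rw [abs_le]; constructor <;> linarith [h1.1, h1.2]
  have h3 := (abs_le.1 (Real.abs_exp_sub_one_sub_id_le h2)).2
  have h4 : Real.exp x = Real.exp (x/2) ^ 2 := by
    rw [← Real.exp_nat_mul]; congr 1; push_cast; ring
  have h5 : Real.exp (x/2) ≤ 1 + x/2 + (x/2)^2 := by linarith
  have h6 : Real.exp (x/2)^2 ≤ (1 + x/2 + (x/2)^2)^2 :=
    pow_le_pow_left₀ (Real.exp_pos _).le h5 2
  rw [h4]
  refine h6.trans ?_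
  have : 0 ≤ 5/4 - x/4 - x^2/16 := by nlinarith [h1.1, h1.2]
  nlinarith [mul_nonneg (sq_nonneg x) this]

lemma aux_mgf_s15 {Ω : Type*} [MeasurableSpace Ω] (P : Measure Ω) [IsProbabilityMeasure P]
    (Z : Ω → ℝ) (hZ : Measurable Z) (hb : ∀ ω, |Z ω| ≤ 2) (h0 : ∫ ω, Z ω ∂P = 0)
    (ν : ℝ) (hν : ∫ ω, (Z ω)^2 ∂P ≤ ν) (t : ℝ) (ht : 0 ≤ t) (ht' : t ≤ 3/4) :
    ∫ ω, Real.exp (t * Z ω) ∂P ≤ Real.exp (2 * t^2 * ν) := by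
  have i1 : Integrable Z P := Integrable.of_bound hZ.aestronglyMeasurable 2
    (Filter.Eventually.of_forall hb)
  have i2 : Integrable (fun ω => (Z ω)^2) P :=
    Integrable.of_bound (hZ.pow_const 2).aestronglyMeasurable 4
    (Filter.Eventually.of_forall fun ω => by
      rw [Real.norm_eq_abs, abs_pow]; nlinarith [hb ω, abs_nonneg (Z ω)])
  have hx : ∀ ω, |t * Z ω| ≤ 3/2 := fun ω => by
    rw [abs_mul, abs_of_nonneg ht]; nlinarith [hb ω, abs_nonneg (Z ω)]
  have i3 : Integrable (fun ω => Real.exp (t * Z ω)) P :=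
    Integrable.of_bound (Real.measurable_exp.comp (hZ.const_mul t)).aestronglyMeasurable
      (Real.exp (3/2)) (Filter.Eventually.of_forall fun ω => by
      rw [Real.norm_eq_abs, Real.abs_exp]; exact Real.exp_le_exp.2 (abs_le.1 (hx ω)).2)
  calc ∫ ω, Real.exp (t * Z ω) ∂P ≤ ∫ ω, ((1 + t * Z ω) + (2 * t^2) * (Z ω)^2) ∂P := by
        refine integral_mono i3 (((integrable_const _).add (i1.const_mul t)).add
          (i2.const_mul _)) fun ω => ?_
        have := aux_exp_bound _ (hx ω)
        simp only
        nlinarith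
    _ = 1 + 2 * t^2 * ∫ ω, (Z ω)^2 ∂P := by
        have i4 : Integrable (fun ω => 1 + t * Z ω) P :=
          (integrable_const _).add (i1.const_mul t)
        rw [integral_add i4 (i2.const_mul _),
          integral_add (integrable_const _) (i1.const_mul t), integral_const_mul,
          integral_const_mul, h0]
        simp
    _ ≤ 1 + 2 * t^2 * ν := by gcongr
    _ ≤ _ := by linarith [Real.add_one_le_exp (2 * t^2 * ν)]

lemma aux_prod {α : Type*} [MeasurableSpace α] (p : Measure α) [IsProbabilityMeasure p]
    (a b : ℕ) (e : Fin a → Fin b) (he : Function.Injective e)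
    (f : α × α → ℝ) (hf : Measurable f) (C : ℝ) (hC : ∀ z, |f z| ≤ C) :
    ∫ ω, ∏ i, f (ω.1 i, ω.2 (e i))
      ∂((Measure.pi fun _ : Fin a => p).prod (Measure.pi fun _ : Fin b => p))
    = (∫ z, f z ∂(p.prod p)) ^ a := by
  have hint : Integrable (fun ω : (Fin a → α) × (Fin b → α) => ∏ i, f (ω.1 i, ω.2 (e i)))
      ((Measure.pi fun _ : Fin a => p).prod (Measure.pi fun _ : Fin b => p)) := by
    refine Integrable.of_bound (Measurable.aestronglyMeasurable ?_) (C^a)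
      (Filter.Eventually.of_forall fun ω => ?_)
    · refine Finset.measurable_prod _ fun i _ => hf.comp ?_
      fun_prop
    · rw [Real.norm_eq_abs, Finset.abs_prod]
      refine (Finset.prod_le_prod (fun _ _ => abs_nonneg _) (fun i _ => hC _)).trans ?_
      simp
  have hintf : Integrable f (p.prod p) := Integrable.of_bound hf.aestronglyMeasurable C
    (Filter.Eventually.of_forall hC)
  rw [integral_prod_symm _ hint, integral_prod_symm _ hintf]
  have h1 : ∀ y : Fin b → α, ∫ x : Fin a → α, ∏ i, f (x i, y (e i))
      ∂(Measure.pi fun _ : Fin a => p) = ∏ i, ∫ x, f (x, y (e i)) ∂p := fun y =>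
    integral_fintype_prod_eq_prod (𝕜 := ℝ) (μ := fun _ : Fin a => p)
      (fun i x => f (x, y (e i)))
  simp only [h1]
  set G : α → ℝ := fun w => ∫ x, f (x, w) ∂p with hG
  have h2 : ∀ y : Fin b → α, ∏ i, G (y (e i))
      = ∏ j, (fun w => if j ∈ Finset.univ.image e then G w else 1) (y j) := by
    intro y
    simp only
    rw [Finset.prod_ite_mem, Finset.univ_inter, Finset.prod_image (fun i _ j _ h => he h)]
  have h3 : ∫ y : Fin b → α, ∏ i, G (y (e i)) ∂(Measure.pi fun _ : Fin b => p)
      = ∏ j, ∫ w, (if j ∈ Finset.univ.image e then G w else 1) ∂p := by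
    simp only [h2]
    exact integral_fintype_prod_eq_prod (𝕜 := ℝ) (μ := fun _ : Fin b => p)
      (fun j w => if j ∈ Finset.univ.image e then G w else 1)
  refine h3.trans ?_
  have h4 : ∀ j, ∫ w, (if j ∈ Finset.univ.image e then G w else 1) ∂p
      = if j ∈ Finset.univ.image e then ∫ w, G w ∂p else 1 := by
    intro j; split_ifs <;> simp
  simp only [h4]
  rw [Finset.prod_ite_mem, Finset.univ_inter, Finset.prod_image (fun i _ j _ h => he h)]
  simp

lemma aux_tail {α : Type*} [MeasurableSpace α] (p : Measure α) [IsProbabilityMeasure p]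
    (a b : ℕ) (ha : 0 < a) (hab : a ≤ b)
    (Z : α × α → ℝ) (hZ : Measurable Z) (hb : ∀ ω, |Z ω| ≤ 2)
    (h0 : ∫ ω, Z ω ∂(p.prod p) = 0)
    (ν : ℝ) (hν : ∫ ω, (Z ω)^2 ∂(p.prod p) ≤ ν) (t : ℝ) (ht : 0 ≤ t) (ht' : t ≤ 3/4) (s : ℝ) :
    ((Measure.pi fun _ : Fin a => p).prod (Measure.pi fun _ : Fin b => p)).real
      {ω | s ≤ (1/((a:ℝ)*(b:ℝ))) * ∑ i, ∑ j, Z (ω.1 i, ω.2 j)}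
    ≤ Real.exp (-(a * (t * s - 2 * t^2 * ν))) := by
  have hb0 : 0 < b := lt_of_lt_of_le ha hab
  haveI : NeZero b := ⟨hb0.ne'⟩
  have haR : (0:ℝ) < a := by exact_mod_cast ha
  have hbR : (0:ℝ) < b := by exact_mod_cast hb0
  set P := (Measure.pi fun _ : Fin a => p).prod (Measure.pi fun _ : Fin b => p) with hP
  set e : Fin b → Fin a → Fin b := fun r i => Fin.castLE hab i + r with he
  have hinj : ∀ r, Function.Injective (e r) := fun r i j h => by
    have : Fin.castLE hab i = Fin.castLE hab j := add_right_cancel h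
    exact Fin.castLE_injective hab this
  set W : Fin b → ((Fin a → α) × (Fin b → α)) → ℝ :=
    fun r ω => ∑ i, t * Z (ω.1 i, ω.2 (e r i)) with hW
  have hsum : ∀ ω : (Fin a → α) × (Fin b → α),
      t * ∑ i, ∑ j, Z (ω.1 i, ω.2 j) = ∑ r, W r ω := by
    intro ω
    simp only [hW]
    rw [Finset.sum_comm (s := (Finset.univ : Finset (Fin b))), Finset.mul_sum]
    refine Finset.sum_congr rfl fun i _ => ?_
    rw [Finset.mul_sum]
    exact (Equiv.sum_comp (Equiv.addLeft (Fin.castLE hab i))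
      (fun j => t * Z (ω.1 i, ω.2 j))).symm
  have hWm : ∀ r, Measurable (W r) := fun r => by
    refine Finset.measurable_sum _ fun i _ => (hZ.comp ?_).const_mul t
    fun_prop
  have htz : ∀ z, t * Z z ≤ 3/2 := fun z => by
    have := (abs_le.1 (hb z)).2
    have h' := mul_le_mul_of_nonneg_left this ht
    linarith
  have hexpW : ∀ r ω, Real.exp (W r ω) = ∏ i, Real.exp (t * Z (ω.1 i, ω.2 (e r i))) :=
    fun r ω => Real.exp_sum _ _
  have hWint : ∀ r, Integrable (fun ω => Real.exp (W r ω)) P := fun r => by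
    refine Integrable.of_bound (Real.measurable_exp.comp (hWm r)).aestronglyMeasurable
      (Real.exp (∑ i : Fin a, (3/2:ℝ))) (Filter.Eventually.of_forall fun ω => ?_)
    rw [Real.norm_eq_abs, Real.abs_exp]
    exact Real.exp_le_exp.2 (Finset.sum_le_sum fun i _ => htz _)
  have hWE : ∀ r, ∫ ω, Real.exp (W r ω) ∂P ≤ Real.exp (a * (2 * t^2 * ν)) := fun r => by
    simp only [hexpW]
    rw [hP, aux_prod p a b (e r) (hinj r) (fun z => Real.exp (t * Z z))
      (Real.measurable_exp.comp (hZ.const_mul t)) (Real.exp (3/2))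
      (fun z => by rw [Real.abs_exp]; exact Real.exp_le_exp.2 (htz z)), Real.exp_nat_mul]
    exact pow_le_pow_left₀ (integral_nonneg fun _ => (Real.exp_pos _).le)
      (aux_mgf_s15 _ Z hZ hb h0 ν hν t ht ht') a
  have hsub : {ω : (Fin a → α) × (Fin b → α) |
        s ≤ (1/((a:ℝ)*(b:ℝ))) * ∑ i, ∑ j, Z (ω.1 i, ω.2 j)}
      ⊆ {ω | Real.exp (a * (t * s)) ≤ ∑ r, (1/(b:ℝ)) * Real.exp (W r ω)} := by
    intro ω hω
    simp only [Set.mem_ofPred_eq] at hω ⊢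
    have h1 : Real.exp (∑ r : Fin b, (1/(b:ℝ)) • W r ω)
        ≤ ∑ r : Fin b, (1/(b:ℝ)) • Real.exp (W r ω) :=
      convexOn_exp.map_sum_le (fun _ _ => by positivity) (by simp [hbR.ne']) (fun _ _ => trivial)
    simp only [smul_eq_mul] at h1
    refine le_trans (Real.exp_le_exp.2 ?_) h1
    rw [← Finset.mul_sum, ← hsum]
    have h2 := mul_le_mul_of_nonneg_left hω (mul_nonneg haR.le ht)
    calc (a:ℝ) * (t * s) = a * t * s := by ring
      _ ≤ _ := h2
      _ = _ := by field_simp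
  have hint : Integrable (fun ω => ∑ r, (1/(b:ℝ)) * Real.exp (W r ω)) P :=
    integrable_finsetSum _ fun r _ => (hWint r).const_mul _
  have hE : ∫ ω, ∑ r, (1/(b:ℝ)) * Real.exp (W r ω) ∂P ≤ Real.exp (a * (2 * t^2 * ν)) := by
    rw [integral_finsetSum _ fun r _ => (hWint r).const_mul _]
    simp only [integral_const_mul]
    calc _ ≤ ∑ r : Fin b, (1/(b:ℝ)) * Real.exp (a * (2 * t^2 * ν)) :=
          Finset.sum_le_sum fun r _ => mul_le_mul_of_nonneg_left (hWE r) (by positivity)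
      _ = _ := by simp; field_simp
  have hM := mul_meas_ge_le_integral_of_nonneg (μ := P)
    (Filter.Eventually.of_forall fun ω => Finset.sum_nonneg fun r _ => by positivity)
    hint (Real.exp (a * (t * s)))
  have h5 : P.real {ω | s ≤ (1/((a:ℝ)*(b:ℝ))) * ∑ i, ∑ j, Z (ω.1 i, ω.2 j)}
      ≤ P.real {ω | Real.exp (a * (t * s)) ≤ ∑ r, (1/(b:ℝ)) * Real.exp (W r ω)} :=
    measureReal_mono hsub
  refine h5.trans ?_
  have h6 : -(a * (t * s - 2 * t^2 * ν)) = a * (2 * t^2 * ν) - a * (t * s) := by ring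
  rw [h6, Real.exp_sub, le_div_iff₀ (Real.exp_pos _), mul_comm]
  exact hM.trans hE

lemma aux_tail2 {α : Type*} [MeasurableSpace α] (p : Measure α) [IsProbabilityMeasure p]
    (a b : ℕ) (k : ℝ) (hk : 0 < k) (hka : k ≤ a) (hkb : k ≤ b)
    (F : α → α → ℝ) (hF : Measurable (Function.uncurry F)) (hb : ∀ x y, |F x y| ≤ 1)
    (ν : ℝ) (hν0 : 0 < ν) (hν : ∫ x, ∫ y, (F x y)^2 ∂p ∂p ≤ ν)
    (lam : ℝ) (hlam : 0 < lam) (hlam' : lam < 3 * Real.sqrt (k * ν)) :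
    ((Measure.pi fun _ : Fin a => p).prod (Measure.pi fun _ : Fin b => p))
      {ω | ∫ z, F z.1 z.2 ∂(p.prod p) + lam * Real.sqrt (ν / k)
        ≤ (1/((a:ℝ)*(b:ℝ))) * ∑ i, ∑ j, F (ω.1 i) (ω.2 j)}
    ≤ ENNReal.ofReal (Real.exp (-lam^2/8)) := by
  set m := ∫ z, F z.1 z.2 ∂(p.prod p) with hm
  set s := lam * Real.sqrt (ν / k) with hs
  have haR : (0:ℝ) < a := hk.trans_le hka
  have hbR : (0:ℝ) < b := hk.trans_le hkb
  have hs0 : 0 < s := by positivity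
  have hs2 : k * s^2 = lam^2 * ν := by
    rw [hs, mul_pow, Real.sq_sqrt (by positivity)]; field_simp
  have hs3 : s ≤ 3 * ν := by
    have h1 : Real.sqrt (k * ν) * Real.sqrt (ν / k) = ν := by
      rw [← Real.sqrt_mul (by positivity)]
      rw [show k * ν * (ν / k) = ν^2 by field_simp]
      exact Real.sqrt_sq hν0.le
    calc s ≤ 3 * Real.sqrt (k * ν) * Real.sqrt (ν / k) := by rw [hs]; gcongr
      _ = 3 * ν := by rw [mul_assoc, h1]
  have iF : Integrable (fun z : α × α => F z.1 z.2) (p.prod p) :=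
    Integrable.of_bound hF.aestronglyMeasurable 1 (Filter.Eventually.of_forall fun z => hb _ _)
  have iF2 : Integrable (fun z : α × α => (F z.1 z.2)^2) (p.prod p) :=
    Integrable.of_bound (hF.pow_const 2).aestronglyMeasurable 1
      (Filter.Eventually.of_forall fun z => by
        rw [Real.norm_eq_abs, abs_pow]; exact pow_le_one₀ (abs_nonneg _) (hb _ _))
  have hm1 : |m| ≤ 1 := by
    have := norm_integral_le_of_norm_le_const (μ := p.prod p) (C := 1)
      (f := fun z : α × α => F z.1 z.2) (Filter.Eventually.of_forall fun z => hb _ _)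
    simpa using this
  have hZb : ∀ z : α × α, |F z.1 z.2 - m| ≤ 2 := fun z =>
    (abs_sub _ _).trans (by linarith [hb z.1 z.2])
  have hZm : Measurable (fun z : α × α => F z.1 z.2 - m) := hF.sub_const m
  have hZ0 : ∫ z : α × α, (F z.1 z.2 - m) ∂(p.prod p) = 0 := by
    rw [integral_sub iF (integrable_const _)]; simp [hm]
  have hZν : ∫ z : α × α, (F z.1 z.2 - m)^2 ∂(p.prod p) ≤ ν := by
    have h1 : ∫ z : α × α, (F z.1 z.2 - m)^2 ∂(p.prod p)
        = ∫ z : α × α, ((F z.1 z.2)^2 - (2 * m) * (F z.1 z.2) + m^2) ∂(p.prod p) := by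
      congr 1; ext z; ring
    have i4 : Integrable (fun z : α × α => (F z.1 z.2)^2 - (2 * m) * (F z.1 z.2)) (p.prod p) :=
      iF2.sub (iF.const_mul _)
    rw [h1, integral_add i4 (integrable_const _),
      integral_sub iF2 (iF.const_mul _), integral_const_mul, ← hm, integral_prod _ iF2]
    simp
    nlinarith [sq_nonneg m]
  have key : ∀ c : ℝ, k ≤ c →
      Real.exp (-(c * (s/(4*ν) * s - 2 * (s/(4*ν))^2 * ν))) ≤ Real.exp (-lam^2/8) := by
    intro c hc
    apply Real.exp_le_exp.2
    have h1 : s/(4*ν) * s - 2 * (s/(4*ν))^2 * ν = s^2/(8*ν) := by field_simp; ring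
    rw [h1]
    have h2 : k * (s^2/(8*ν)) ≤ c * (s^2/(8*ν)) := by gcongr
    have h3 : k * (s^2/(8*ν)) = lam^2/8 := by
      rw [← mul_div_assoc, hs2]; field_simp
    linarith
  have ht0 : 0 ≤ s/(4*ν) := by positivity
  have ht1 : s/(4*ν) ≤ 3/4 := by rw [div_le_iff₀ (by positivity)]; linarith
  have hcent : ∀ ω : (Fin a → α) × (Fin b → α),
      (1/((a:ℝ)*(b:ℝ))) * ∑ i, ∑ j, (F (ω.1 i) (ω.2 j) - m)
      = (1/((a:ℝ)*(b:ℝ))) * ∑ i, ∑ j, F (ω.1 i) (ω.2 j) - m := by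
    intro ω
    simp only [Finset.sum_sub_distrib, Finset.sum_const, Finset.card_univ, Fintype.card_fin,
      nsmul_eq_mul]
    field_simp
  have hset : {ω : (Fin a → α) × (Fin b → α) | m + s
        ≤ (1/((a:ℝ)*(b:ℝ))) * ∑ i, ∑ j, F (ω.1 i) (ω.2 j)}
      = {ω | s ≤ (1/((a:ℝ)*(b:ℝ))) * ∑ i, ∑ j, (F (ω.1 i) (ω.2 j) - m)} := by
    ext ω
    simp only [Set.mem_ofPred_eq, hcent]
    constructor <;> intro h <;> linarith
  rw [hset, ← ofReal_measureReal]
  apply ENNReal.ofReal_le_ofReal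
  rcases le_total a b with hab | hab
  · exact (aux_tail p a b (by exact_mod_cast haR) hab (fun z => F z.1 z.2 - m) hZm hZb hZ0 ν hZν
      _ ht0 ht1 s).trans (key _ hka)
  · have hsw : MeasurePreserving (Prod.swap : α × α → α × α) (p.prod p) (p.prod p) :=
      Measure.measurePreserving_swap
    have e1 : ∫ z : α × α, (F z.2 z.1 - m) ∂(p.prod p) = 0 := by
      rw [← hZ0]
      exact hsw.integral_comp MeasurableEquiv.prodComm.measurableEmbedding
        (fun z => F z.1 z.2 - m)
    have e2 : ∫ z : α × α, (F z.2 z.1 - m)^2 ∂(p.prod p) ≤ ν := by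
      refine le_trans (le_of_eq ?_) hZν
      exact hsw.integral_comp MeasurableEquiv.prodComm.measurableEmbedding
        (fun z => (F z.1 z.2 - m)^2)
    have h := (aux_tail p b a (by exact_mod_cast hbR) hab (fun z => F z.2 z.1 - m)
      (hZm.comp measurable_swap) (fun z => hZb z.swap) e1 ν e2 _ ht0 ht1 s).trans (key _ hkb)
    refine le_trans (le_of_eq ?_) h
    have hsw2 : MeasurePreserving (MeasurableEquiv.prodComm :
        (Fin a → α) × (Fin b → α) ≃ᵐ (Fin b → α) × (Fin a → α))
        ((Measure.pi fun _ : Fin a => p).prod (Measure.pi fun _ : Fin b => p))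
        ((Measure.pi fun _ : Fin b => p).prod (Measure.pi fun _ : Fin a => p)) :=
      Measure.measurePreserving_swap
    rw [measureReal_def, measureReal_def, ← hsw2.measure_preimage_equiv]
    congr 2
    ext ω
    simp only [Set.mem_ofPred_eq, Set.mem_preimage, mul_comm (a:ℝ) (b:ℝ)]
    rw [Finset.sum_comm]
    rfl

/-- Proposition B.4, part 1: under `H₀ : p = q`, for `0 < λ < 3√(c_aνn)`, with
probability at least `1 − 4e^{−λ²/8}` under the joint product law of the four samples,
`T̂_a ≤ 4λ√(ν/(c_a n))`. -/
theorem asym_mmd_concentration_H0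
    {d : ℕ} (𝒳 : Set (EuclideanSpace ℝ (Fin d))) (h𝒳 : MeasurableSet 𝒳)
    (K : 𝒳 → 𝒳 → ℝ)
    (hKmeas : Measurable (Function.uncurry K))
    (hKsym : ∀ x y, K x y = K y x)
    (hKpsd : ∀ (m : ℕ) (z : Fin m → 𝒳) (a : Fin m → ℝ),
      0 ≤ ∑ i, ∑ j, a i * a j * K (z i) (z j))
    (hKbdd : ∀ x y, |K x y| ≤ 1)
    (p q : Measure 𝒳) [IsProbabilityMeasure p] [IsProbabilityMeasure q]
    (ν : ℝ) (hν1 : ν ≤ 1)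
    (hνpp : ∫ x, ∫ y, (K x y)^2 ∂p ∂p ≤ ν)
    (hνpq : ∫ x, ∫ y, (K x y)^2 ∂q ∂p ≤ ν)
    (hνqq : ∫ x, ∫ y, (K x y)^2 ∂q ∂q ≤ ν)
    (n1X n1Y n2X n2Y : ℕ) (ca : ℝ) (hca : 0 < ca) (hca1 : ca < 1)
    (hbal1 : ca * ((n1X + n1Y + n2X + n2Y : ℕ) : ℝ) ≤ (n1X : ℝ))
    (hbal2 : ca * ((n1X + n1Y + n2X + n2Y : ℕ) : ℝ) ≤ (n1Y : ℝ))
    (hbal3 : ca * ((n1X + n1Y + n2X + n2Y : ℕ) : ℝ) ≤ (n2X : ℝ))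
    (hbal4 : ca * ((n1X + n1Y + n2X + n2Y : ℕ) : ℝ) ≤ (n2Y : ℝ))
    (hH0 : p = q)
    (lam : ℝ) (hlam : 0 < lam)
    (hlam' : lam < 3 * Real.sqrt (ca * ν * ((n1X + n1Y + n2X + n2Y : ℕ) : ℝ))) :
    1 - ENNReal.ofReal (4 * Real.exp (-lam^2 / 8)) ≤
      (((Measure.pi fun _ : Fin n1X => p).prod (Measure.pi fun _ : Fin n1Y => q)).prod
        ((Measure.pi fun _ : Fin n2X => p).prod (Measure.pi fun _ : Fin n2Y => q)))
        {ω : ((Fin n1X → 𝒳) × (Fin n1Y → 𝒳)) × ((Fin n2X → 𝒳) × (Fin n2Y → 𝒳)) |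
          asymMMD K n1X n1Y n2X n2Y ω.1 ω.2 ≤
            4 * lam * Real.sqrt (ν/(ca * ((n1X + n1Y + n2X + n2Y : ℕ) : ℝ)))} := by
  subst hH0
  set N : ℝ := ((n1X + n1Y + n2X + n2Y : ℕ) : ℝ) with hN
  have hsq : 0 < Real.sqrt (ca * ν * N) := by nlinarith
  have hpos : 0 < ca * ν * N := Real.sqrt_pos.1 hsq
  have hN0 : 0 ≤ N := Nat.cast_nonneg _
  have hNpos : 0 < N := by
    rcases hN0.eq_or_lt with h | h
    · rw [← h] at hpos; simp at hpos
    · exact h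
  have hk : 0 < ca * N := mul_pos hca hNpos
  have hν0 : 0 < ν := by
    have : 0 < (ca * N) * ν := by linarith [hpos, mul_right_comm ca ν N]
    exact (pos_iff_pos_of_mul_pos this).1 hk
  have hl : lam < 3 * Real.sqrt (ca * N * ν) := by rwa [mul_right_comm]
  set s := lam * Real.sqrt (ν / (ca * N)) with hs
  set m := ∫ z, K z.1 z.2 ∂(p.prod p) with hm
  have T1 : ∀ a b : ℕ, ca * N ≤ a → ca * N ≤ b →
      ((Measure.pi fun _ : Fin a => p).prod (Measure.pi fun _ : Fin b => p))
        {ω | m + s ≤ (1/((a:ℝ)*(b:ℝ))) * ∑ i, ∑ j, K (ω.1 i) (ω.2 j)}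
      ≤ ENNReal.ofReal (Real.exp (-lam^2/8)) := fun a b ha hb =>
    aux_tail2 p a b (ca * N) hk ha hb K hKmeas hKbdd ν hν0 hνpp lam hlam hl
  have T2 : ∀ a b : ℕ, ca * N ≤ a → ca * N ≤ b →
      ((Measure.pi fun _ : Fin a => p).prod (Measure.pi fun _ : Fin b => p))
        {ω | (1/((a:ℝ)*(b:ℝ))) * ∑ i, ∑ j, K (ω.1 i) (ω.2 j) ≤ m - s}
      ≤ ENNReal.ofReal (Real.exp (-lam^2/8)) := fun a b ha hb => by
    have h := aux_tail2 p a b (ca * N) hk ha hb (fun x y => - K x y) hKmeas.neg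
      (fun x y => by rw [abs_neg]; exact hKbdd x y) ν hν0 (by simpa using hνpp) lam hlam hl
    refine le_trans (le_of_eq ?_) h
    congr 1
    ext ω
    simp only [Set.mem_ofPred_eq, integral_neg, Finset.sum_neg_distrib, mul_neg]
    rw [← hm, ← hs]
    constructor <;> intro h <;> linarith
  set P := (((Measure.pi fun _ : Fin n1X => p).prod (Measure.pi fun _ : Fin n1Y => p)).prod
        ((Measure.pi fun _ : Fin n2X => p).prod (Measure.pi fun _ : Fin n2Y => p))) with hP
  have hUm : ∀ a b : ℕ, Measurable (fun ω : (Fin a → 𝒳) × (Fin b → 𝒳) =>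
      (1/((a:ℝ)*(b:ℝ))) * ∑ i, ∑ j, K (ω.1 i) (ω.2 j)) := fun a b => by
    refine Measurable.const_mul (Finset.measurable_sum _ fun i _ =>
      Finset.measurable_sum _ fun j _ => ?_) _
    exact hKmeas.comp (f := fun ω : (Fin a → 𝒳) × (Fin b → 𝒳) => (ω.1 i, ω.2 j)) (by fun_prop)
  have M11 := (Measure.measurePreserving_swap (μ := Measure.pi fun _ : Fin n1X => p)
    (ν := Measure.pi fun _ : Fin n2X => p)).comp
    ((measurePreserving_fst (μ := Measure.pi fun _ : Fin n1X => p)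
      (ν := Measure.pi fun _ : Fin n1Y => p)).prod
     (measurePreserving_fst (μ := Measure.pi fun _ : Fin n2X => p)
      (ν := Measure.pi fun _ : Fin n2Y => p)))
  have M12 := (Measure.measurePreserving_swap (μ := Measure.pi fun _ : Fin n1Y => p)
    (ν := Measure.pi fun _ : Fin n2X => p)).comp
    ((measurePreserving_snd (μ := Measure.pi fun _ : Fin n1X => p)
      (ν := Measure.pi fun _ : Fin n1Y => p)).prod
     (measurePreserving_fst (μ := Measure.pi fun _ : Fin n2X => p)
      (ν := Measure.pi fun _ : Fin n2Y => p)))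
  have M21 := (Measure.measurePreserving_swap (μ := Measure.pi fun _ : Fin n1X => p)
    (ν := Measure.pi fun _ : Fin n2Y => p)).comp
    ((measurePreserving_fst (μ := Measure.pi fun _ : Fin n1X => p)
      (ν := Measure.pi fun _ : Fin n1Y => p)).prod
     (measurePreserving_snd (μ := Measure.pi fun _ : Fin n2X => p)
      (ν := Measure.pi fun _ : Fin n2Y => p)))
  have M22 := (Measure.measurePreserving_swap (μ := Measure.pi fun _ : Fin n1Y => p)
    (ν := Measure.pi fun _ : Fin n2Y => p)).comp
    ((measurePreserving_snd (μ := Measure.pi fun _ : Fin n1X => p)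
      (ν := Measure.pi fun _ : Fin n1Y => p)).prod
     (measurePreserving_snd (μ := Measure.pi fun _ : Fin n2X => p)
      (ν := Measure.pi fun _ : Fin n2Y => p)))
  have B1 := T1 n2X n1X hbal3 hbal1
  have B2 := T2 n2X n1Y hbal3 hbal2
  have B3 := T2 n2Y n1X hbal4 hbal1
  have B4 := T1 n2Y n1Y hbal4 hbal2
  rw [← M11.measure_preimage
    (measurableSet_le measurable_const (hUm n2X n1X)).nullMeasurableSet] at B1
  rw [← M12.measure_preimage
    (measurableSet_le (hUm n2X n1Y) measurable_const).nullMeasurableSet] at B2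
  rw [← M21.measure_preimage
    (measurableSet_le (hUm n2Y n1X) measurable_const).nullMeasurableSet] at B3
  rw [← M22.measure_preimage
    (measurableSet_le measurable_const (hUm n2Y n1Y)).nullMeasurableSet] at B4
  rw [← hP] at B1 B2 B3 B4
  have hU : ENNReal.ofReal (4 * Real.exp (-lam^2/8)) = ENNReal.ofReal (Real.exp (-lam^2/8))
      + ENNReal.ofReal (Real.exp (-lam^2/8)) + ENNReal.ofReal (Real.exp (-lam^2/8))
      + ENNReal.ofReal (Real.exp (-lam^2/8)) := by
    have h0 := (Real.exp_pos (-lam^2/8)).le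
    rw [← ENNReal.ofReal_add h0 h0, ← ENNReal.ofReal_add (by positivity) h0,
      ← ENNReal.ofReal_add (by positivity) h0]
    congr 1; ring
  have huniv : P Set.univ = 1 := measure_univ
  rw [tsub_le_iff_right, ← huniv, hU]
  refine le_trans ?_ (add_le_add le_rfl (add_le_add (add_le_add (add_le_add B1 B2) B3) B4))
  refine le_trans (measure_mono ?_) ((measure_union_le _ _).trans (add_le_add le_rfl
    ((measure_union_le _ _).trans (add_le_add ((measure_union_le _ _).trans
      (add_le_add (measure_union_le _ _) le_rfl)) le_rfl))))
  intro ω _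
  simp only [Set.mem_union, Set.mem_ofPred_eq, Set.mem_preimage, Function.comp, Prod.map,
    Prod.swap, asymMMD]
  by_contra hcon
  push Not at hcon
  obtain ⟨h0, ⟨⟨h1, h2⟩, h3⟩, h4⟩ := hcon
  have : 4 * lam * Real.sqrt (ν / (ca * N)) = 4 * s := by rw [hs]; ring
  rw [this] at h0
  linarith
end
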